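/- arXiv:1302.3453 — 3 statements merged into one kernel-verified Lean document; each statement's English description precedes it below -/
import Mathlib

section
/- Let ℓ ≥ 2 be an integer, let m be an odd positive integer, and set w = 3m². Let p₁ and p₂ be primes with p₁ ≡ 11 (mod 24), p₂ ≡ 7 (mod 24) and p₁ + p₂ = 2·w^{2^{ℓ−1}}. Then the 2-class group of ℚ(√(−p₁p₂)) is isomorphic to (ℤ/2ℤ) × (ℤ/2^ℓℤ). -/
open NumberField

/-- `twoClassGroupIso d G` says: for any realization `K` of the imaginary quadratic field
`ℚ(√-d)` (i.e. a number field generated over `ℚ` by a square root of `-d`), every Sylow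
2-subgroup of the ideal class group of its ring of integers (the 2-class group `Cl₂(-d)`)
is isomorphic to `G`. -/
def twoClassGroupIso (d : ℕ) (G : Type) [Group G] : Prop :=
  ∀ (K : Type) [Field K] [NumberField K] (α : K),
    α ^ 2 = -(d : K) →
    IntermediateField.adjoin ℚ {α} = ⊤ →
    ∀ P : Sylow 2 (ClassGroup (NumberField.RingOfIntegers K)),
      Nonempty ((P : Subgroup (ClassGroup (NumberField.RingOfIntegers K))) ≃* G)

/-!
Put `d = p₁ p₂` and `n = 2 ^ (ℓ - 1)`. Then `d ≡ 1 (mod 4)`, so the ring of integers is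
`ℤ[√(-d)]`. Writing `p₁ = wⁿ + t` and `p₂ = wⁿ - t` gives `t² + d = w²ⁿ`, hence
`(t + √(-d)) = A²ⁿ` for an ideal `A` of norm `w`. The class of `A` has order exactly `2n = 2 ^ ℓ`:
otherwise `Aⁿ` would be generated by an element of norm `wⁿ < d`, necessarily a rational integer,
whose square cannot generate `(t + √(-d))`. Let `R` be the prime above `2`, so that `R² = (2)`.
Genus theory at `p₁` and `p₂` shows that none of the classes of `R`, `A` and `R A` is a square,
while every class of order at most two contains an ideal `J` with `J² = (e)` and `e ∣ 2 p₁`, so that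
there are at most four of them. A finite abelian group with such elements has Sylow 2-subgroup
`ℤ/2 × ℤ/2 ^ ℓ`.
-/

open QuadraticAlgebra
open scoped nonZeroDivisors

section ZModProd

variable {G : Type*} [CommGroup G] {m n : ℕ} {a b : G}

/-- The homomorphism `ℤ/m × ℤ/n → G` sending `(1, 0)` to `a` and `(0, 1)` to `b`, used to
identify the subgroup generated by two independent elements with `ℤ/m × ℤ/n`. -/
def zmodProdHom (ha : a ^ m = 1) (hb : b ^ n = 1) : Multiplicative (ZMod m × ZMod n) →* G :=
  AddMonoidHom.toMultiplicativeLeft <|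
    (ZMod.lift m ⟨zmultiplesHom (Additive G) (.ofMul a), by
      simp [← ofMul_pow, ha]⟩).coprod
    (ZMod.lift n ⟨zmultiplesHom (Additive G) (.ofMul b), by
      simp [← ofMul_pow, hb]⟩)

lemma zmodProdHom_ofAdd_intCast (ha : a ^ m = 1) (hb : b ^ n = 1) (x y : ℤ) :
    zmodProdHom ha hb (.ofAdd (x, y)) = a ^ x * b ^ y := by
  simp [zmodProdHom]

lemma exists_zmodProdHom_eq_zpow_mul_zpow (ha : a ^ m = 1) (hb : b ^ n = 1)
    (z : Multiplicative (ZMod m × ZMod n)) :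
    ∃ x y : ℤ, z = .ofAdd ((x : ZMod m), (y : ZMod n)) ∧ zmodProdHom ha hb z = a ^ x * b ^ y := by
  obtain ⟨x, hx⟩ := ZMod.intCast_surjective z.toAdd.1
  obtain ⟨y, hy⟩ := ZMod.intCast_surjective z.toAdd.2
  obtain rfl : z = .ofAdd ((x : ZMod m), (y : ZMod n)) := by rw [hx, hy]; rfl
  exact ⟨x, y, rfl, zmodProdHom_ofAdd_intCast ha hb x y⟩

lemma zmodProdHom_injective (ha : a ^ m = 1) (hb : b ^ n = 1)
    (h : ∀ x y : ℤ, a ^ x * b ^ y = 1 → (m : ℤ) ∣ x ∧ (n : ℤ) ∣ y) :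
    Function.Injective (zmodProdHom ha hb) := by
  refine (injective_iff_map_eq_one _).mpr fun z hz ↦ ?_
  obtain ⟨x, y, rfl, hxy⟩ := exists_zmodProdHom_eq_zpow_mul_zpow ha hb z
  obtain ⟨hx, hy⟩ := h x y (hxy.symm.trans hz)
  rw [(ZMod.intCast_zmod_eq_zero_iff_dvd x m).mpr hx,
    (ZMod.intCast_zmod_eq_zero_iff_dvd y n).mpr hy]
  rfl

end ZModProd

section SylowTwo

lemma nonempty_sylow_mulEquiv_of_mulEquiv {p : ℕ} [Fact p.Prime] {G H M : Type*} [Group G]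
    [Finite G] [Group H] [Group M] (e : G ≃* H) (h : ∀ Q : Sylow p H, Nonempty (Q ≃* M))
    (P : Sylow p G) : Nonempty (P ≃* M) := by
  obtain ⟨f⟩ := h (P.mapSurjective (f := e.toMonoidHom) e.surjective)
  exact ⟨(e.subgroupMap P).trans f⟩

variable {G : Type*} [CommGroup G]

lemma even_and_even_of_isSquare_zpow_mul_zpow {a b : G} (ha : ¬ IsSquare a) (hb : ¬ IsSquare b)
    (hab : ¬ IsSquare (a * b)) {x y : ℤ} (h : IsSquare (a ^ x * b ^ y)) : Even x ∧ Even y := by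
  have isSquare_of_mul_sq {g s : G} (hg : IsSquare (g * s ^ 2)) : IsSquare g := by
    simpa using hg.div (IsSquare.sq s)
  have zpow_odd (g : G) (i : ℤ) : g ^ (2 * i + 1) = g * (g ^ i) ^ 2 := by group
  have zpow_even (g : G) (i : ℤ) : g ^ (2 * i) = (g ^ i) ^ 2 := by group
  obtain ⟨i, rfl | rfl⟩ := x.even_or_odd' <;> obtain ⟨j, rfl | rfl⟩ := y.even_or_odd'
  · exact ⟨even_two_mul i, even_two_mul j⟩
  · rw [zpow_even, zpow_odd, mul_left_comm, ← mul_pow] at h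
    exact absurd (isSquare_of_mul_sq h) hb
  · rw [zpow_odd, zpow_even, mul_assoc, ← mul_pow] at h
    exact absurd (isSquare_of_mul_sq h) ha
  · rw [zpow_odd, zpow_odd, mul_mul_mul_comm, ← mul_pow] at h
    exact absurd (isSquare_of_mul_sq h) hab

variable [Finite G]

lemma not_dvd_index_of_forall_exists_mul_pow {p : ℕ} [Fact p.Prime] {H : Subgroup G}
    (h : ∀ g : G, ∃ t ∈ H, ∃ s : G, g = t * s ^ p) : ¬ p ∣ H.index := by
  intro hdvd
  obtain ⟨x, hx⟩ := exists_prime_orderOf_dvd_card' (G := G ⧸ H) p hdvd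
  have hsurj : Function.Surjective fun z : G ⧸ H ↦ z ^ p := by
    intro z
    obtain ⟨g, rfl⟩ := QuotientGroup.mk_surjective z
    obtain ⟨t, ht, s, rfl⟩ := h g
    refine ⟨s, ?_⟩
    rw [QuotientGroup.mk_mul, (QuotientGroup.eq_one_iff t).mpr ht, one_mul, QuotientGroup.mk_pow]
  have hx1 : x = 1 := Finite.injective_iff_surjective.mpr hsurj (by
    simpa [hx] using pow_orderOf_eq_one x)
  exact (Fact.out : p.Prime).ne_one (by rw [← hx, hx1, orderOf_one])

-- `[G : G²]` equals the order of the 2-torsion, so four classes modulo squares exhaust `G`.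
lemma exists_eq_zpow_mul_zpow_mul_sq {a b : G} (ha : ¬ IsSquare a) (hb : ¬ IsSquare b)
    (hab : ¬ IsSquare (a * b)) (htor : Nat.card (powMonoidHom 2 : G →* G).ker ≤ 4) (g : G) :
    ∃ (x y : ℤ) (s : G), g = a ^ x * b ^ y * s ^ 2 := by
  set squares : Subgroup G := (powMonoidHom 2 : G →* G).range
  have sq_eq_one (g : G) : (g : G ⧸ squares) ^ 2 = 1 := by
    rw [← QuotientGroup.mk_pow, QuotientGroup.eq_one_iff]
    exact ⟨g, rfl⟩
  have hinj : Function.Injective (zmodProdHom (sq_eq_one a) (sq_eq_one b)) := by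
    refine zmodProdHom_injective _ _ fun x y hxy ↦ ?_
    rw [← QuotientGroup.mk_zpow, ← QuotientGroup.mk_zpow, ← QuotientGroup.mk_mul,
      QuotientGroup.eq_one_iff] at hxy
    obtain ⟨s, hs⟩ := hxy
    have hsq : s ^ 2 = a ^ x * b ^ y := hs
    exact (even_and_even_of_isSquare_zpow_mul_zpow ha hb hab (hsq ▸ .sq s)).imp
      Even.two_dvd Even.two_dvd
  have hcard : Nat.card (G ⧸ squares) ≤ Nat.card (Multiplicative (ZMod 2 × ZMod 2)) := by
    calc Nat.card (G ⧸ squares) = Nat.card (powMonoidHom 2 : G →* G).ker := Subgroup.index_range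
      _ ≤ 4 := htor
      _ = _ := by simp
  obtain ⟨z, hz⟩ := (hinj.bijective_of_nat_card_le hcard).2 g
  obtain ⟨x, y, -, hxy⟩ := exists_zmodProdHom_eq_zpow_mul_zpow (sq_eq_one a) (sq_eq_one b) z
  have hxyg : ((a ^ x * b ^ y : G) : G ⧸ squares) = g := hxy.symm.trans hz
  obtain ⟨s, hs⟩ := QuotientGroup.eq.mp hxyg
  exact ⟨x, y, s, by rw [show s ^ 2 = _ from hs, mul_inv_cancel_left]⟩

theorem sylow_two_mulEquiv_zmod_two_prod {a b : G} {n : ℕ} (ha2 : a ^ 2 = 1)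
    (hbn : orderOf b = 2 ^ n) (ha : ¬ IsSquare a) (hb : ¬ IsSquare b) (hab : ¬ IsSquare (a * b))
    (htor : Nat.card (powMonoidHom 2 : G →* G).ker ≤ 4) (P : Sylow 2 G) :
    Nonempty (P ≃* Multiplicative (ZMod 2 × ZMod (2 ^ n))) := by
  have hb2 : b ^ 2 ^ n = 1 := hbn ▸ pow_orderOf_eq_one b
  have hinj : Function.Injective (zmodProdHom ha2 hb2) := by
    refine zmodProdHom_injective _ _ fun x y hxy ↦ ?_
    obtain ⟨hx, -⟩ := even_and_even_of_isSquare_zpow_mul_zpow ha hb hab (hxy ▸ IsSquare.one)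
    have hax : a ^ x = 1 := orderOf_dvd_iff_zpow_eq_one.mp
      ((Int.natCast_dvd_natCast.mpr (orderOf_dvd_of_pow_eq_one ha2)).trans hx.two_dvd)
    rw [hax, one_mul, ← orderOf_dvd_iff_zpow_eq_one, hbn] at hxy
    exact ⟨hx.two_dvd, hxy⟩
  have hpgroup : IsPGroup 2 (zmodProdHom ha2 hb2).range := by
    refine IsPGroup.of_card (n := n + 1) ?_
    rw [← Nat.card_congr (MonoidHom.ofInjective hinj).toEquiv, Nat.card_congr Multiplicative.toAdd]
    simp [pow_succ']
  have hindex : ¬ 2 ∣ (zmodProdHom ha2 hb2).range.index := by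
    refine not_dvd_index_of_forall_exists_mul_pow fun g ↦ ?_
    obtain ⟨x, y, s, hg⟩ := exists_eq_zpow_mul_zpow_mul_sq ha hb hab htor g
    exact ⟨_, ⟨_, zmodProdHom_ofAdd_intCast ha2 hb2 x y⟩, s, hg⟩
  exact ⟨(P.equiv (hpgroup.toSylow hindex)).trans (MonoidHom.ofInjective hinj).symm⟩

end SylowTwo

section Residues

variable {p : ℕ} [Fact p.Prime]

lemma not_isSquare_two_zmod (hp : p % 8 = 3) : ¬ IsSquare (2 : ZMod p) := by
  rw [ZMod.exists_sq_eq_two_iff (by rintro rfl; omega)]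
  omega

lemma isSquare_three_zmod (hp : p % 12 = 11) : IsSquare (3 : ZMod p) := by
  have hp3 : (p : ZMod 3) = (2 : ℕ) :=
    (ZMod.natCast_eq_natCast_iff p 2 3).mpr (by grind [Nat.ModEq])
  have reciprocity := ZMod.exists_sq_eq_prime_iff_of_mod_four_eq_three (p := p) (q := 3)
    (by omega) (by omega) (by rintro rfl; omega)
  rw [hp3] at reciprocity
  exact_mod_cast reciprocity.mpr (by decide)

lemma not_isSquare_three_zmod (hp : p % 12 = 7) : ¬ IsSquare (3 : ZMod p) := by
  have hp3 : (p : ZMod 3) = (1 : ℕ) :=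
    (ZMod.natCast_eq_natCast_iff p 1 3).mpr (by grind [Nat.ModEq])
  have reciprocity := ZMod.exists_sq_eq_prime_iff_of_mod_four_eq_three (p := p) (q := 3)
    (by omega) (by omega) (by rintro rfl; omega)
  rw [hp3] at reciprocity
  exact fun h ↦ reciprocity.mp (by exact_mod_cast h) (by simp)

lemma not_isSquare_mul_of_isSquare {F : Type*} [Field F] {a b : F} (ha : ¬ IsSquare a)
    (hb : IsSquare b) (hb0 : b ≠ 0) : ¬ IsSquare (a * b) := fun hab ↦
  ha (by simpa [hb0] using hab.div hb)

lemma not_isSquare_two_mul_three_mul_sq_zmod (hp : p % 24 = 11) {m : ℕ} (hm : ¬ p ∣ 3 * m ^ 2) :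
    ¬ IsSquare (2 * (3 * m ^ 2 : ℕ) : ZMod p) := by
  refine not_isSquare_mul_of_isSquare (not_isSquare_two_zmod (by omega)) ?_
    ((ZMod.natCast_eq_zero_iff _ p).not.mpr hm)
  push_cast
  exact (isSquare_three_zmod (by omega)).mul (.sq _)

lemma not_isSquare_three_mul_sq_zmod (hp : p % 12 = 7) {m : ℕ} (hm : ¬ p ∣ 3 * m ^ 2) :
    ¬ IsSquare ((3 * m ^ 2 : ℕ) : ZMod p) := by
  rw [← ZMod.natCast_eq_zero_iff] at hm
  push_cast at hm ⊢
  exact not_isSquare_mul_of_isSquare (not_isSquare_three_zmod hp) (.sq _)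
    (right_ne_zero_of_mul hm)

lemma mul_sq_ne_sq_add_mul_sq {c d : ℤ} (hpd : (p : ℤ) ∣ d) (hpd2 : ¬ (p : ℤ) ^ 2 ∣ d)
    (hc : ¬ IsSquare (c : ZMod p)) {z : ℤ} (hz : z ≠ 0) (x y : ℤ) :
    c * z ^ 2 ≠ x ^ 2 + d * y ^ 2 := by
  have hp : Prime (p : ℤ) := Nat.prime_iff_prime_int.mp Fact.out
  obtain ⟨e, rfl⟩ := hpd
  have hpe : ¬ (p : ℤ) ∣ e := fun h ↦ hpd2 (by rw [pow_two]; exact mul_dvd_mul_left _ h)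
  induction hN : z.natAbs using Nat.strong_induction_on generalizing x y z with
  | _ N ih =>
  subst hN
  intro heq
  have hmod : (c : ZMod p) * (z : ZMod p) ^ 2 = (x : ZMod p) ^ 2 := by
    simpa using congrArg (Int.cast : ℤ → ZMod p) heq
  have hpz : (z : ZMod p) = 0 := by
    by_contra hpz
    exact not_isSquare_mul_of_isSquare hc (.sq (z : ZMod p)) (pow_ne_zero 2 hpz)
      (hmod ▸ .sq (x : ZMod p))
  have hpx : (x : ZMod p) = 0 := by simpa [hpz, eq_comm] using hmod
  obtain ⟨z, rfl⟩ := (ZMod.intCast_zmod_eq_zero_iff_dvd z p).mp hpz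
  obtain ⟨x, rfl⟩ := (ZMod.intCast_zmod_eq_zero_iff_dvd x p).mp hpx
  have hey : (p : ℤ) * (c * z ^ 2 - x ^ 2) = e * y ^ 2 :=
    mul_left_cancel₀ hp.ne_zero (by linear_combination heq)
  obtain ⟨y, rfl⟩ : (p : ℤ) ∣ y :=
    hp.dvd_of_dvd_pow ((hp.dvd_or_dvd ⟨_, hey.symm⟩).resolve_left hpe)
  have hz0 : z ≠ 0 := right_ne_zero_of_mul hz
  refine ih z.natAbs ?_ hz0 x y rfl (mul_left_cancel₀ hp.ne_zero (by linear_combination hey))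
  rw [Int.natAbs_mul, Int.natAbs_natCast]
  exact lt_mul_left (Int.natAbs_pos.mpr hz0) (Fact.out : p.Prime).one_lt

end Residues

section SumOfPrimes

lemma mul_mod_four_eq_one {a b u : ℕ} (ha : Odd a) (hu : Odd u) (h : a + b = 2 * u) :
    a * b % 4 = 1 := by
  obtain ⟨r, rfl⟩ := ha
  obtain ⟨s, rfl⟩ := hu
  obtain ⟨hr, hb⟩ | ⟨hr, hb⟩ :
      (2 * r + 1) % 4 = 1 ∧ b % 4 = 1 ∨ (2 * r + 1) % 4 = 3 ∧ b % 4 = 3 := by omega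
  all_goals rw [Nat.mul_mod, hr, hb]

variable {p q w n : ℕ} [Fact q.Prime]

lemma ne_of_add_eq_two_mul_pow (hw : ¬ IsSquare (w : ZMod q)) (hsum : p + q = 2 * w ^ n) :
    p ≠ q := by
  rintro rfl
  have hp : p ∣ w := (Fact.out : p.Prime).dvd_of_dvd_pow (n := n) ⟨1, by omega⟩
  exact hw (by rw [(ZMod.natCast_eq_zero_iff w p).mpr hp]; exact .zero)

variable [Fact p.Prime]

lemma not_dvd_left_of_add_eq_two_mul_pow (hpq : p ≠ q) (hn : n ≠ 0)
    (hsum : p + q = 2 * w ^ n) : ¬ p ∣ w := fun hpw ↦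
  hpq <| (Nat.prime_dvd_prime_iff_eq Fact.out Fact.out).mp <| (Nat.dvd_add_right dvd_rfl).mp <|
    hsum ▸ (dvd_pow hpw hn).mul_left 2

-- With `u = wⁿ` and `t = p - u` one has `p q = (u + t) (u - t)`.
lemma exists_sq_add_mul_eq_pow (hpq : p ≠ q) (hw : Odd w) (hn : n ≠ 0) (hsum : p + q = 2 * w ^ n) :
    ∃ t : ℤ, t ^ 2 + (p * q : ℕ) = w ^ (n * 2) ∧ IsCoprime (2 * t) w := by
  obtain ⟨t, ht⟩ : ∃ t : ℤ, (p : ℤ) = w ^ n + t := ⟨p - w ^ n, by ring⟩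
  have hq : (q : ℤ) = w ^ n - t := by
    have : (p : ℤ) + q = 2 * w ^ n := by exact_mod_cast hsum
    linear_combination this - ht
  refine ⟨t, by push_cast; rw [ht, hq]; ring, .mul_left ?_ ?_⟩
  · exact_mod_cast Nat.isCoprime_iff_coprime.mpr (Nat.coprime_two_left.mpr hw)
  · obtain ⟨a, b, hab⟩ : IsCoprime (p : ℤ) q :=
      Nat.isCoprime_iff_coprime.mpr ((Nat.coprime_primes Fact.out Fact.out).mpr hpq)
    rw [← IsCoprime.pow_right_iff (Nat.pos_of_ne_zero hn)]
    exact ⟨a - b, a + b, by rw [← hab, ht, hq]; ring⟩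

lemma not_sq_dvd_mul (hpq : p ≠ q) : ¬ p ^ 2 ∣ p * q := by
  have hp : p.Prime := Fact.out
  rw [pow_two, mul_dvd_mul_iff_left hp.ne_zero, Nat.prime_dvd_prime_iff_eq hp Fact.out]
  exact hpq

end SumOfPrimes

lemma span_pair_sq_eq_span_singleton {R : Type*} [CommRing R] {a b c : R} (h : b ^ 2 = a * c)
    (hco : ∃ u v w, u * a + v * b + w * c = 1) :
    Ideal.span {a, b} ^ 2 = Ideal.span {a} := by
  obtain ⟨u, v, w, huvw⟩ := hco
  refine le_antisymm ?_ ?_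
  · rw [pow_two, Ideal.span_pair_mul_span_pair, Ideal.span_le]
    rintro x (rfl | rfl | rfl | rfl) <;> rw [SetLike.mem_coe, Ideal.mem_span_singleton]
    · exact dvd_mul_right a a
    · exact dvd_mul_right a b
    · exact dvd_mul_left a b
    · exact ⟨c, by rw [← pow_two, h]⟩
  · have ha : a ∈ Ideal.span {a, b} := Ideal.subset_span (by simp)
    have hb : b ∈ Ideal.span {a, b} := Ideal.subset_span (by simp)
    have hmem : u * (a * a) + v * (a * b) + w * (b * b) ∈ Ideal.span {a, b} * Ideal.span {a, b} :=
      add_mem (add_mem (Ideal.mul_mem_left _ _ (Ideal.mul_mem_mul ha ha))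
        (Ideal.mul_mem_left _ _ (Ideal.mul_mem_mul ha hb)))
        (Ideal.mul_mem_left _ _ (Ideal.mul_mem_mul hb hb))
    rw [Ideal.span_singleton_le_iff_mem, pow_two]
    convert hmem using 1
    linear_combination -a * huvw - w * h

section DedekindDomain

variable {R : Type*} [CommRing R] [IsDedekindDomain R]

lemma mk0_eq_one_of_coe_eq_span_singleton {I : (Ideal R)⁰} {x : R}
    (hI : (I : Ideal R) = Ideal.span {x}) : ClassGroup.mk0 I = 1 :=
  (ClassGroup.mk0_eq_one_iff I.2).mpr ⟨⟨x, hI⟩⟩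

lemma exists_coe_eq_span_singleton_of_mk0_eq_one {I : (Ideal R)⁰} (hI : ClassGroup.mk0 I = 1) :
    ∃ x, (I : Ideal R) = Ideal.span {x} :=
  ((ClassGroup.mk0_eq_one_iff I.2).mp hI).principal

lemma ideal_eq_of_sq_eq_sq {I J : Ideal R} (h : I ^ 2 = J ^ 2) : I = J :=
  dvd_antisymm ((UniqueFactorizationMonoid.pow_dvd_pow_iff_dvd two_ne_zero).mp h.dvd)
    ((UniqueFactorizationMonoid.pow_dvd_pow_iff_dvd two_ne_zero).mp h.symm.dvd)

lemma exists_eq_span_singleton_mul_of_sq_eq {I : Ideal R} {n a : R} (hn : n ≠ 0)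
    (h : I ^ 2 = Ideal.span {n ^ 2 * a}) :
    ∃ J, I = Ideal.span {n} * J ∧ J ^ 2 = Ideal.span {a} := by
  have hsq : I ^ 2 = Ideal.span {n} ^ 2 * Ideal.span {a} := by
    rw [h, Ideal.span_singleton_pow, Ideal.span_singleton_mul_span_singleton]
  obtain ⟨J, rfl⟩ := (UniqueFactorizationMonoid.pow_dvd_pow_iff_dvd two_ne_zero).mp
    (Dvd.intro _ hsq.symm)
  refine ⟨J, rfl, mul_left_cancel₀ (pow_ne_zero 2 ?_) (by rwa [mul_pow] at hsq)⟩
  simpa using hn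

lemma exists_mk0_eq_and_sq_eq_of_mul_sq_eq {I : (Ideal R)⁰} {x n a : R} (hx : x ≠ 0)
    (hn : n ≠ 0) (h : (Ideal.span {x} * I) ^ 2 = Ideal.span {n ^ 2 * a}) :
    ∃ J : (Ideal R)⁰, ClassGroup.mk0 J = ClassGroup.mk0 I ∧
      Ideal.span {x} * I = Ideal.span {n} * (J : Ideal R) ∧ (J : Ideal R) ^ 2 = Ideal.span {a} := by
  obtain ⟨J, hJ, hJa⟩ := exists_eq_span_singleton_mul_of_sq_eq hn h
  have hJ0 : J ≠ 0 := by
    rintro rfl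
    exact nonZeroDivisors.coe_ne_zero I (by simpa [hx] using hJ)
  refine ⟨⟨J, mem_nonZeroDivisors_of_ne_zero hJ0⟩, ?_, hJ, hJa⟩
  exact ClassGroup.mk0_eq_mk0_iff.mpr ⟨n, x, hn, hx, hJ.symm⟩

end DedekindDomain

section IntegralClosure

lemma quadraticAlgebra_algHom_injective {R A : Type*} [CommRing R] [LinearOrder R]
    [IsStrictOrderedRing R] [CommRing A] [Algebra R A] [FaithfulSMul R A] {c : R} (hc : c < 0)
    (f : QuadraticAlgebra R c 0 →ₐ[R] A) : Function.Injective f := by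
  refine (injective_iff_map_eq_zero f).mpr fun z hz ↦ ?_
  have hnorm : z.norm = 0 := by
    refine FaithfulSMul.algebraMap_injective R A ?_
    rw [← f.commutes, algebraMap_norm_eq_mul_star, map_mul, hz, zero_mul, map_zero]
  rw [norm_def] at hnorm
  have him : z.im = 0 := by
    by_contra h
    nlinarith [mul_neg_of_neg_of_pos hc (pow_two_pos_of_ne_zero h), sq_nonneg z.re]
  ext
  · simpa [him] using hnorm
  · exact him

lemma quadraticAlgebra_algHom_surjective {F K : Type*} [Field F] [Field K] [Algebra F K] {a b : F}
    {f : QuadraticAlgebra F a b →ₐ[F] K} (hf : IntermediateField.adjoin F {f omega} = ⊤) :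
    Function.Surjective f := by
  have homega : IsAlgebraic F (f omega) :=
    ((Algebra.IsIntegral.isIntegral (R := F) omega).map f).isAlgebraic
  rw [← AlgHom.range_eq_top, ← top_le_iff, ← IntermediateField.top_toSubalgebra, ← hf,
    IntermediateField.adjoin_simple_toSubalgebra_of_isAlgebraic homega, Algebra.adjoin_le_iff,
    Set.singleton_subset_iff]
  exact ⟨omega, rfl⟩

lemma exists_intCast_eq_of_mul_sq_eq {d : ℕ} (hd : Squarefree d) {r : ℚ} {n : ℤ}
    (h : d * r ^ 2 = n) : ∃ k : ℤ, k = r := by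
  obtain ⟨s, hs⟩ := IsIntegrallyClosed.exists_algebraMap_eq_of_isIntegral_pow (R := ℤ)
    (x := d * r) two_pos (by
      rw [show (d * r) ^ 2 = algebraMap ℤ ℚ (d * n) by
        rw [eq_intCast, Int.cast_mul, Int.cast_natCast, ← h]; ring]
      exact isIntegral_algebraMap)
  have hs' : (s : ℚ) = d * r := hs
  have hsq : s ^ 2 = d * n := by
    have : (s : ℚ) ^ 2 = d * n := by rw [hs', ← h]; ring
    exact_mod_cast this
  obtain ⟨k, rfl⟩ : (d : ℤ) ∣ s :=
    ((Int.squarefree_natCast.mpr hd).dvd_pow_iff_dvd two_ne_zero).mp ⟨n, hsq⟩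
  exact ⟨k, mul_left_cancel₀ (Nat.cast_ne_zero.mpr hd.ne_zero) (by exact_mod_cast hs')⟩

lemma even_and_even_of_sq_add_mul_sq_eq {d : ℕ} (hd : d % 4 = 1) {x y n : ℤ}
    (h : x ^ 2 + d * y ^ 2 = 4 * n) : Even x ∧ Even y := by
  obtain ⟨k, rfl⟩ : ∃ k, d = 4 * k + 1 := ⟨d / 4, by omega⟩
  obtain ⟨a, rfl | rfl⟩ := x.even_or_odd' <;> obtain ⟨b, rfl | rfl⟩ := y.even_or_odd'
  · exact ⟨even_two_mul a, even_two_mul b⟩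
  all_goals push_cast at h; ring_nf at h; omega

end IntegralClosure

/-- The order `ℤ[√(-d)]`, the ring of integers of `ℚ(√(-d))` when `d ≡ 1 (mod 4)` is squarefree;
the element `√(-d)` is `QuadraticAlgebra.omega`. -/
abbrev QuadraticOrder (d : ℕ) : Type := QuadraticAlgebra ℤ (-d) 0

namespace QuadraticOrder

variable {d : ℕ}

local notation "O" => QuadraticOrder d

lemma omega_sq : (omega : O) ^ 2 = -(d : O) := by
  ext <;> simp [pow_two]

lemma norm_eq (z : O) : z.norm = z.re ^ 2 + d * z.im ^ 2 := by
  rw [norm_def]; ring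

lemma norm_nonneg (z : O) : 0 ≤ z.norm := by
  rw [norm_eq]; positivity

lemma intCast_dvd_iff {n : ℤ} {z : O} : (n : O) ∣ z ↔ n ∣ z.re ∧ n ∣ z.im :=
  algebraMap_dvd_iff

lemma intCast_dvd_intCast {m n : ℤ} : (m : O) ∣ n ↔ m ∣ n :=
  algebraMap_dvd_iff_dvd

lemma exists_le_span_intCast_and_mul_mem {J : Ideal O} (hJ : J ≠ ⊥) :
    ∃ n b : ℤ, n ≠ 0 ∧ J ≤ Ideal.span {(n : O)} ∧ (n : O) * ⟨b, 1⟩ ∈ J := by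
  let imJ : Ideal ℤ := (J.restrictScalars ℤ).map (imₗ _ _)
  obtain ⟨n, hn⟩ : ∃ n, imJ = Ideal.span {n} := (IsPrincipalIdealRing.principal imJ).principal
  have im_dvd {z : O} (hz : z ∈ J) : n ∣ z.im := by
    rw [← Ideal.mem_span_singleton, ← hn]
    exact ⟨z, hz, rfl⟩
  have dvd_of_mem {z : O} (hz : z ∈ J) : (n : O) ∣ z :=
    intCast_dvd_iff.mpr ⟨by simpa using im_dvd (J.mul_mem_left omega hz), im_dvd hz⟩
  obtain ⟨z, hz, hzn⟩ : n ∈ imJ := hn ▸ Ideal.mem_span_singleton_self n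
  obtain ⟨⟨b, c⟩, rfl⟩ := dvd_of_mem hz
  have hn0 : n ≠ 0 := by
    rintro rfl
    refine hJ ((Submodule.eq_bot_iff J).mpr fun z hz ↦ ?_)
    simpa using dvd_of_mem hz
  obtain rfl : c = 1 := by simpa [hn0] using hzn
  exact ⟨n, b, hn0, fun z hz ↦ Ideal.mem_span_singleton.mpr (dvd_of_mem hz), hz⟩

lemma dvd_two_mul_of_sq_eq_span {J : Ideal O} {b e : ℤ} (hb : ⟨b, 1⟩ ∈ J)
    (he : J ^ 2 = Ideal.span {(e : O)}) : e ∣ 2 * d := by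
  have hdvd : (e : O) ∣ ⟨b, 1⟩ ^ 2 := Ideal.mem_span_singleton.mp (he ▸ Ideal.pow_mem_pow hb 2)
  rw [pow_two, mk_mul_mk] at hdvd
  obtain ⟨⟨r, hr⟩, ⟨s, hs⟩⟩ := intCast_dvd_iff.mp hdvd
  exact ⟨b * s - 2 * r, by linear_combination b * hs - 2 * hr⟩

lemma norm_eq_one_of_span_sq_eq {z : O} {t : ℤ} (hz : z.norm < d)
    (h : Ideal.span {z} ^ 2 = Ideal.span {⟨t, 1⟩}) : z.norm = 1 := by
  obtain ⟨x, y⟩ := z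
  rw [norm_eq] at hz ⊢
  obtain rfl : y = 0 := by
    by_contra hy
    have : 0 < y ^ 2 := by positivity
    nlinarith [sq_nonneg x]
  have hdvd : ((x ^ 2 : ℤ) : O) ∣ ⟨t, 1⟩ := by
    rw [Ideal.span_singleton_pow] at h
    rw [← Ideal.span_singleton_le_span_singleton, ← h, Int.cast_pow]
    rfl
  have hx : x ^ 2 = 1 := Int.eq_one_of_dvd_one (sq_nonneg x) (intCast_dvd_iff.mp hdvd).2
  rw [hx]; ring

lemma exists_sq_eq_span_two (hd : d % 4 = 1) :
    ∃ R : Ideal O, R ^ 2 = Ideal.span {((2 : ℕ) : O)} := by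
  obtain ⟨k, hk⟩ : ∃ k, d = 4 * k + 1 := ⟨d / 4, by omega⟩
  have homega : (omega : O) ^ 2 = -(4 * k + 1) := by
    rw [omega_sq]; exact_mod_cast congrArg (fun n : ℕ ↦ -(n : O)) hk
  exact ⟨_, span_pair_sq_eq_span_singleton (b := 1 + omega) (c := (omega : O) - 2 * k)
    (by push_cast; linear_combination homega) ⟨-k, 1, -1, by push_cast; ring⟩⟩

lemma exists_intCast_eq_of_isIntegral (hd : Squarefree d) (hd4 : d % 4 = 1)
    {z : QuadraticAlgebra ℚ (-d) 0} (hz : IsIntegral ℤ z) : ∃ x y : ℤ, z = ⟨x, y⟩ := by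
  have hstar : IsIntegral ℤ (star z) := hz.map (starRingEnd _).toIntAlgHom
  have exists_int {r : ℚ} (hr : IsIntegral ℤ (algebraMap ℚ (QuadraticAlgebra ℚ (-d) 0) r)) :
      ∃ n : ℤ, n = r :=
    IsIntegrallyClosed.isIntegral_iff.mp <|
      (isIntegral_algebraMap_iff algebraMap_injective).mp hr
  obtain ⟨t, ht⟩ := exists_int (algebraMap_trace_eq_add_star (z := z) ▸ hz.add hstar)
  obtain ⟨n, hn⟩ := exists_int (algebraMap_norm_eq_mul_star z ▸ hz.mul hstar)
  rw [trace_def, zero_mul, add_zero] at ht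
  rw [norm_def] at hn
  obtain ⟨s, hs⟩ := exists_intCast_eq_of_mul_sq_eq hd (r := 2 * z.im) (n := 4 * n - t ^ 2) (by
    push_cast; rw [ht, hn]; ring)
  have hts : t ^ 2 + d * s ^ 2 = 4 * n := by
    have : (t : ℚ) ^ 2 + d * s ^ 2 = 4 * n := by rw [ht, hs, hn]; ring
    exact_mod_cast this
  obtain ⟨⟨x, rfl⟩, ⟨y, rfl⟩⟩ := even_and_even_of_sq_add_mul_sq_eq hd4 hts
  push_cast at ht hs
  exact ⟨x, y, by ext <;> linarith⟩

theorem isIntegralClosure {K : Type*} [Field K] [CharZero K] [Algebra (QuadraticOrder d) K]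
    (htop : IntermediateField.adjoin ℚ {algebraMap (QuadraticOrder d) K omega} = ⊤)
    (hd : Squarefree d) (hd4 : d % 4 = 1) : IsIntegralClosure (QuadraticOrder d) ℤ K := by
  set α := algebraMap (QuadraticOrder d) K omega with hα
  have hα2 : α * α = -(d : K) := by
    rw [hα, ← map_mul, ← pow_two, omega_sq, map_neg, map_natCast]
  have algebraMap_mk (x y : ℤ) : algebraMap (QuadraticOrder d) K ⟨x, y⟩ = x + y * α := by
    rw [mk_eq_add_smul_omega]; simp [hα]
  let φ : QuadraticAlgebra ℚ (-d) 0 →ₐ[ℚ] K := lift ⟨α, by simp [hα2]⟩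
  have φ_mk (x y : ℤ) : φ ⟨x, y⟩ = algebraMap (QuadraticOrder d) K ⟨x, y⟩ := by
    simp [φ, algebraMap_mk, Algebra.smul_def]
  have hφ : Function.Surjective φ :=
    quadraticAlgebra_algHom_surjective (by simpa [φ] using htop)
  have hd0 : 0 < d := hd.ne_zero.bot_lt
  have hφ_inj : Function.Injective φ := quadraticAlgebra_algHom_injective (by simpa using hd0) φ
  refine ⟨quadraticAlgebra_algHom_injective (by simpa using hd0)
    (algebraMap (QuadraticOrder d) K).toIntAlgHom, fun {x} ↦ ⟨fun hx ↦ ?_, ?_⟩⟩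
  · obtain ⟨z, rfl⟩ := hφ x
    obtain ⟨x, y, rfl⟩ := exists_intCast_eq_of_isIntegral hd hd4
      ((isIntegral_algHom_iff (φ.restrictScalars ℤ) hφ_inj).mp hx)
    exact ⟨⟨x, y⟩, (φ_mk x y).symm⟩
  · rintro ⟨z, rfl⟩
    exact (Algebra.IsIntegral.isIntegral z).map (algebraMap (QuadraticOrder d) K).toIntAlgHom

variable [IsDedekindDomain (QuadraticOrder d)]

lemma absNorm_span_singleton (z : O) : (Ideal.absNorm (Ideal.span {z}) : ℤ) = z.norm := by
  have hnorm : Algebra.norm ℤ z = z.norm := by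
    rw [← det_toLinearMap_eq_norm, Algebra.norm_apply]; rfl
  rw [Ideal.absNorm_span_singleton, hnorm, Int.natAbs_of_nonneg (norm_nonneg z)]

lemma absNorm_eq_of_sq_eq_span_natCast {I : Ideal O} {n : ℕ}
    (hI : I ^ 2 = Ideal.span {(n : O)}) : Ideal.absNorm I = n := by
  have hnorm := absNorm_span_singleton (n : O)
  rw [← hI, map_pow, QuadraticAlgebra.norm_natCast] at hnorm
  exact Nat.pow_left_injective two_ne_zero (by exact_mod_cast hnorm)

lemma exists_norm_eq_absNorm_mul_sq {I : (Ideal O)⁰} (hI : IsSquare (ClassGroup.mk0 I)) :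
    ∃ (z : O) (n : ℤ), n ≠ 0 ∧ z.norm = Ideal.absNorm (I : Ideal O) * n ^ 2 := by
  obtain ⟨s, hs⟩ := hI
  obtain ⟨J, hJ⟩ := ClassGroup.mk0_surjective s⁻¹
  obtain ⟨z, hz⟩ := exists_coe_eq_span_singleton_of_mk0_eq_one (I := I * J ^ 2) (by
    rw [map_mul, map_pow, hJ, hs, pow_two, mul_mul_mul_comm, mul_inv_cancel, one_mul])
  refine ⟨z, Ideal.absNorm (J : Ideal O), ?_, ?_⟩
  · rw [Nat.cast_ne_zero, Ne, Ideal.absNorm_eq_zero_iff]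
    exact nonZeroDivisors.coe_ne_zero J
  · rw [← absNorm_span_singleton, ← hz, Submonoid.coe_mul, SubmonoidClass.coe_pow, map_mul, map_pow]
    push_cast
    rfl

-- Norms from ideals in the principal genus are represented by `x² + d y²` up to squares.
lemma not_isSquare_mk0 {p : ℕ} [Fact p.Prime] (hpd : p ∣ d) (hpd2 : ¬ p ^ 2 ∣ d) {I : (Ideal O)⁰}
    (hI : ¬ IsSquare (Ideal.absNorm (I : Ideal O) : ZMod p)) : ¬ IsSquare (ClassGroup.mk0 I) := by
  intro hsq
  obtain ⟨z, n, hn, hz⟩ := exists_norm_eq_absNorm_mul_sq hsq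
  exact mul_sq_ne_sq_add_mul_sq (by exact_mod_cast hpd) (by exact_mod_cast hpd2)
    (by exact_mod_cast hI) hn z.re z.im (hz.symm.trans (norm_eq z))

-- Hilbert 90: if `I² = (z)` then `z / N(I)` has norm one, and `β = N(I) + z̄` trivializes it.
lemma exists_mk0_eq_and_sq_eq_span_intCast {C : ClassGroup O} (hC : C ^ 2 = 1) :
    ∃ (J : (Ideal O)⁰) (a : ℤ), ClassGroup.mk0 J = C ∧
      (J : Ideal O) ^ 2 = Ideal.span {(a : O)} := by
  obtain ⟨I, rfl⟩ := ClassGroup.mk0_surjective C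
  obtain ⟨z, hz⟩ := exists_coe_eq_span_singleton_of_mk0_eq_one (I := I ^ 2) (by rwa [map_pow])
  rw [SubmonoidClass.coe_pow] at hz
  set N : ℤ := (Ideal.absNorm (I : Ideal O) : ℤ)
  have hN : z * star z = (N : O) ^ 2 := by
    rw [← algebraMap_norm_eq_mul_star, ← absNorm_span_singleton, ← hz, map_pow]
    simp [N]
  set β : O := N + star z with hβ
  by_cases hβ0 : β = 0
  · refine ⟨I, -N, rfl, hz.trans ?_⟩
    have : star z = ((-N : ℤ) : O) := by
      rw [Int.cast_neg]; exact eq_neg_of_add_eq_zero_right hβ0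
    rw [← star_star z, this, star_intCast]
  · obtain ⟨J, hJ, -, hJsq⟩ := exists_mk0_eq_and_sq_eq_of_mul_sq_eq (I := I) (n := 1)
      (a := ((N * β.norm : ℤ) : O)) hβ0 one_ne_zero (by
        have hnorm : ((β.norm : ℤ) : O) = β * star β := algebraMap_norm_eq_mul_star β
        rw [mul_pow, hz, Ideal.span_singleton_pow, Ideal.span_singleton_mul_span_singleton,
          Int.cast_mul, hnorm, hβ, star_add, star_star, star_intCast]
        congr 2
        linear_combination ((N : O) + star z) * hN)
    exact ⟨J, _, hJ, hJsq⟩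

theorem exists_mk0_eq_and_sq_eq_span_dvd {C : ClassGroup O} (hC : C ^ 2 = 1) :
    ∃ (J : (Ideal O)⁰) (e : ℕ), ClassGroup.mk0 J = C ∧ (J : Ideal O) ^ 2 = Ideal.span {(e : O)} ∧
      e ∣ 2 * d := by
  obtain ⟨I, a, rfl, hIa⟩ := exists_mk0_eq_and_sq_eq_span_intCast hC
  obtain ⟨n, b, hn, hIn, hb⟩ :=
    exists_le_span_intCast_and_mul_mem (nonZeroDivisors.coe_ne_zero I)
  have hn0 : (n : O) ≠ 0 := Int.cast_ne_zero.mpr hn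
  obtain ⟨e, rfl⟩ : n ^ 2 ∣ a := by
    rw [← intCast_dvd_intCast (d := d), ← Ideal.span_singleton_le_span_singleton, ← hIa,
      Int.cast_pow, ← Ideal.span_singleton_pow]
    exact Ideal.pow_right_mono hIn 2
  obtain ⟨J, hJI, hJ, hJe⟩ := exists_mk0_eq_and_sq_eq_of_mul_sq_eq (I := I) (a := (e : O))
    one_ne_zero hn0 (by simpa using hIa)
  have hbJ : ⟨b, 1⟩ ∈ (J : Ideal O) := by
    rw [Ideal.span_singleton_one, Ideal.top_mul] at hJ
    obtain ⟨z, hz, hzb⟩ := Ideal.mem_span_singleton_mul.mp (hJ ▸ hb)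
    exact mul_left_cancel₀ hn0 hzb ▸ hz
  refine ⟨J, e.natAbs, hJI, ?_, ?_⟩
  · rw [hJe, Ideal.span_singleton_eq_span_singleton]
    simpa using (Int.associated_natAbs e).map (Int.castRingHom O)
  · simpa [Int.natAbs_mul] using Int.natAbs_dvd_natAbs.mpr (dvd_two_mul_of_sq_eq_span hbJ hJe)

lemma exists_mk0_eq_and_sq_eq_span_of_mul_eq {I : (Ideal O)⁰} {n e f : ℕ} (hn : n ≠ 0)
    (hI : (I : Ideal O) ^ 2 = Ideal.span {(e : O)}) (hdef : d * e = n ^ 2 * f) :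
    ∃ J : (Ideal O)⁰, ClassGroup.mk0 J = ClassGroup.mk0 I ∧
      (J : Ideal O) ^ 2 = Ideal.span {(f : O)} := by
  have homega : (omega : O) ≠ 0 := fun h ↦ one_ne_zero (α := ℤ) (congrArg QuadraticAlgebra.im h)
  obtain ⟨J, hJI, -, hJf⟩ := exists_mk0_eq_and_sq_eq_of_mul_sq_eq (I := I) (a := (f : O)) homega
    (Nat.cast_ne_zero.mpr hn) (by
      rw [mul_pow, hI, Ideal.span_singleton_pow, Ideal.span_singleton_mul_span_singleton, omega_sq,
        neg_mul, Ideal.span_singleton_neg]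
      exact_mod_cast congrArg (fun k : ℕ ↦ Ideal.span {(k : O)}) hdef)
  exact ⟨J, hJI, hJf⟩

-- Multiplying by `(√(-d))` exchanges the ideals of square `(q e)` and `(p e)`.
lemma exists_mk0_eq_and_sq_eq_span_dvd_two_mul_prime {p q : ℕ} (hp : p.Prime) (hq : q.Prime)
    (hd : d = p * q) {C : ClassGroup O} (hC : C ^ 2 = 1) :
    ∃ (J : (Ideal O)⁰) (e : ℕ), ClassGroup.mk0 J = C ∧ (J : Ideal O) ^ 2 = Ideal.span {(e : O)} ∧
      e ∣ 2 * p := by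
  obtain ⟨J, e, hJC, hJe, he⟩ := exists_mk0_eq_and_sq_eq_span_dvd hC
  rw [hd, ← mul_assoc] at he
  by_cases hqe : q ∣ e
  swap
  · exact ⟨J, e, hJC, hJe, ((hq.coprime_iff_not_dvd.mpr hqe).symm).dvd_of_dvd_mul_right he⟩
  obtain ⟨f, rfl⟩ := hqe
  rw [mul_comm (2 * p), mul_dvd_mul_iff_left hq.ne_zero] at he
  have hd0 : d ≠ 0 := hd ▸ mul_ne_zero hp.ne_zero hq.ne_zero
  obtain ⟨n, g, hn, hng, hg⟩ : ∃ n g : ℕ, n ≠ 0 ∧ d * (q * f) = n ^ 2 * g ∧ g ∣ 2 * p := by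
    by_cases hpf : p ∣ f
    · obtain ⟨g, rfl⟩ := hpf
      exact ⟨d, g, hd0, by rw [hd]; ring, (dvd_mul_left g p).trans he⟩
    · refine ⟨q, f * p, hq.ne_zero, by rw [hd]; ring, mul_dvd_mul_right ?_ p⟩
      exact ((hp.coprime_iff_not_dvd.mpr hpf).symm).dvd_of_dvd_mul_right he
  obtain ⟨I, hIJ, hIg⟩ := exists_mk0_eq_and_sq_eq_span_of_mul_eq hn hJe hng
  exact ⟨I, g, hIJ.trans hJC, hIg, hg⟩

open scoped Pointwise in
theorem card_ker_powMonoidHom_two_le_four {p q : ℕ} (hp : p.Prime) (hq : q.Prime)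
    (hd : d = p * q) : Nat.card (powMonoidHom 2 : ClassGroup O →* ClassGroup O).ker ≤ 4 := by
  choose J e hJ hJe he using fun C : (powMonoidHom 2 : ClassGroup O →* ClassGroup O).ker ↦
    exists_mk0_eq_and_sq_eq_span_dvd_two_mul_prime hp hq hd C.2
  have hmem C : e C ∈ (2 * p).divisors :=
    Nat.mem_divisors.mpr ⟨he C, mul_ne_zero two_ne_zero hp.ne_zero⟩
  have hinj : Function.Injective fun C ↦ (⟨e C, hmem C⟩ : (2 * p).divisors) := by
    intro C D hCD
    have hJCD : J C = J D := Subtype.ext <| ideal_eq_of_sq_eq_sq <| by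
      rw [hJe, hJe, show e C = e D from congrArg Subtype.val hCD]
    exact Subtype.ext ((hJ C).symm.trans (hJCD ▸ hJ D))
  calc _ ≤ Nat.card (2 * p).divisors := Nat.card_le_card_of_injective _ hinj
    _ = (Nat.divisors 2 * Nat.divisors p).card := by
      rw [Nat.card_eq_fintype_card, Fintype.card_coe, Nat.divisors_mul]
    _ ≤ (Nat.divisors 2).card * (Nat.divisors p).card := Finset.card_mul_le
    _ = 4 := by
      rw [Nat.prime_two.divisors, hp.divisors, Finset.card_pair (by simp),
        Finset.card_pair hp.ne_one.symm]

lemma exists_span_eq_pow_and_absNorm_eq {t : ℤ} {w n : ℕ} (hn : n ≠ 0) (ht : t ^ 2 + d = w ^ n)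
    (htw : IsCoprime (2 * t) w) :
    ∃ A : Ideal O, A ^ n = Ideal.span {⟨t, 1⟩} ∧ Ideal.absNorm A = w := by
  classical
  let _ : GCDMonoid (Ideal O) := UniqueFactorizationMonoid.toGCDMonoid _
  have hmul : (⟨t, 1⟩ : O) * ⟨t, -1⟩ = w ^ n := by
    have : (⟨t, 1⟩ : O) * ⟨t, -1⟩ = ((t ^ 2 + d : ℤ) : O) := by
      ext <;> simp [pow_two]
    rw [this, ht]; push_cast; rfl
  have hcoprime : IsCoprime (Ideal.span {(⟨t, 1⟩ : O)}) (Ideal.span {⟨t, -1⟩}) := by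
    rw [Ideal.isCoprime_span_singleton_iff]
    obtain ⟨r, s, hrs⟩ : IsCoprime (2 * t) ((w : ℤ) ^ n) := htw.pow_right
    have hrsO : (r : O) * (2 * t) + s * w ^ n = 1 := by
      exact_mod_cast congrArg (Int.cast : ℤ → O) hrs
    have hadd : (⟨t, 1⟩ : O) + ⟨t, -1⟩ = 2 * t := by
      ext <;> simp [two_mul]
    exact ⟨r + s * ⟨t, -1⟩, r, by linear_combination hrsO + r * hadd + s * hmul⟩
  obtain ⟨A, hA⟩ := exists_eq_pow_of_mul_eq_pow_of_coprime hcoprime (by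
    rw [Ideal.span_singleton_mul_span_singleton, hmul, ← Ideal.span_singleton_pow])
  refine ⟨A, hA.symm, Nat.pow_left_injective hn ?_⟩
  have hnorm := absNorm_span_singleton (⟨t, 1⟩ : O)
  rw [hA, norm_eq, map_pow, one_pow, mul_one, ht] at hnorm
  exact_mod_cast hnorm

theorem orderOf_mk0_eq_two_pow {A : (Ideal O)⁰} {t : ℤ} {k : ℕ}
    (hA : (A : Ideal O) ^ 2 ^ (k + 1) = Ideal.span {⟨t, 1⟩})
    (h1 : Ideal.absNorm (A : Ideal O) ≠ 1)
    (hd : Ideal.absNorm (A : Ideal O) ^ 2 ^ k < d) :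
    orderOf (ClassGroup.mk0 A) = 2 ^ (k + 1) := by
  refine orderOf_eq_prime_pow (fun hk ↦ ?_) ?_
  · obtain ⟨z, hz⟩ := exists_coe_eq_span_singleton_of_mk0_eq_one (I := A ^ 2 ^ k) (by rwa [map_pow])
    rw [SubmonoidClass.coe_pow] at hz
    have hnorm : ((Ideal.absNorm (A : Ideal O) ^ 2 ^ k : ℕ) : ℤ) = z.norm := by
      rw [← absNorm_span_singleton, ← hz, map_pow]
    have hone : z.norm = 1 := norm_eq_one_of_span_sq_eq (t := t)
      (by rw [← hnorm]; exact_mod_cast hd) (by rw [← hz, ← pow_mul, ← pow_succ, hA])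
    rw [hone] at hnorm
    exact h1 ((Nat.pow_eq_one.mp (by exact_mod_cast hnorm)).resolve_right (by positivity))
  · rw [← map_pow]
    exact mk0_eq_one_of_coe_eq_span_singleton (by rw [SubmonoidClass.coe_pow, hA])

end QuadraticOrder

theorem twoClassGroupIso_of_forall_sylow_mulEquiv {d : ℕ} {G : Type} [Group G]
    (hd : Squarefree d) (hd4 : d % 4 = 1)
    (h : ∀ [IsDedekindDomain (QuadraticOrder d)] [Finite (ClassGroup (QuadraticOrder d))]
      (P : Sylow 2 (ClassGroup (QuadraticOrder d))), Nonempty (P ≃* G)) :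
    twoClassGroupIso d G := by
  intro K _ _ α hα htop P
  let _ : Algebra (QuadraticOrder d) K :=
    (lift ⟨α, by simpa [pow_two] using hα⟩ : QuadraticOrder d →ₐ[ℤ] K).toAlgebra
  have : IsIntegralClosure (QuadraticOrder d) ℤ K :=
    QuadraticOrder.isIntegralClosure (by simpa [RingHom.algebraMap_toAlgebra] using htop) hd hd4
  have : IsDomain (QuadraticOrder d) :=
    (IsIntegralClosure.algebraMap_injective (QuadraticOrder d) ℤ K).isDomain
  have : IsDedekindDomain (QuadraticOrder d) := IsIntegralClosure.isDedekindDomain ℤ ℚ K _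
  let e := ClassGroup.mulEquiv (RingOfIntegers.equiv (K := K) (QuadraticOrder d))
  have : Finite (ClassGroup (QuadraticOrder d)) := .of_equiv _ e.toEquiv
  exact nonempty_sylow_mulEquiv_of_mulEquiv e h P

theorem sylow_two_classGroup_quadraticOrder_mulEquiv {k w p q : ℕ} [Fact p.Prime] [Fact q.Prime]
    (hw : Odd w) (hsum : p + q = 2 * w ^ 2 ^ k) (hd4 : p * q % 4 = 1)
    (h2p : ¬ IsSquare (2 : ZMod p))
    (h2wp : ¬ IsSquare (2 * w : ZMod p)) (hwq : ¬ IsSquare (w : ZMod q))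
    [IsDedekindDomain (QuadraticOrder (p * q))] [Finite (ClassGroup (QuadraticOrder (p * q)))]
    (P : Sylow 2 (ClassGroup (QuadraticOrder (p * q)))) :
    Nonempty (P ≃* Multiplicative (ZMod 2 × ZMod (2 ^ (k + 1)))) := by
  have hp : p.Prime := Fact.out
  have hq : q.Prime := Fact.out
  have hpq : p ≠ q := ne_of_add_eq_two_mul_pow hwq hsum
  have hw1 : w ≠ 1 := by rintro rfl; exact hwq (by simp)
  obtain ⟨R, hR2⟩ := QuadraticOrder.exists_sq_eq_span_two hd4
  have hR : Ideal.absNorm R = 2 := QuadraticOrder.absNorm_eq_of_sq_eq_span_natCast hR2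
  obtain ⟨t, ht, htw⟩ := exists_sq_add_mul_eq_pow hpq hw (by positivity) hsum
  obtain ⟨A, hApow, hA⟩ := QuadraticOrder.exists_span_eq_pow_and_absNorm_eq (by positivity) ht htw
  lift R to (Ideal (QuadraticOrder (p * q)))⁰ using
    mem_nonZeroDivisors_of_ne_zero (by rintro rfl; simp at hR)
  lift A to (Ideal (QuadraticOrder (p * q)))⁰ using
    mem_nonZeroDivisors_of_ne_zero (by rintro rfl; simp [← hA] at hw)
  refine sylow_two_mulEquiv_zmod_two_prod (a := ClassGroup.mk0 R) (b := ClassGroup.mk0 A)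
    ?_ ?_ ?_ ?_ ?_ (QuadraticOrder.card_ker_powMonoidHom_two_le_four hp hq rfl) P
  · rw [← map_pow]
    exact mk0_eq_one_of_coe_eq_span_singleton (by rw [SubmonoidClass.coe_pow, hR2])
  · refine QuadraticOrder.orderOf_mk0_eq_two_pow hApow (hA ▸ hw1) ?_
    rw [hA]
    nlinarith [hp.two_le, hq.two_le, hw.pow (n := 2 ^ k) |>.pos]
  · refine QuadraticOrder.not_isSquare_mk0 (p := p) (dvd_mul_right p q) (not_sq_dvd_mul hpq) ?_
    simpa [hR] using h2p
  · refine QuadraticOrder.not_isSquare_mk0 (p := q) (dvd_mul_left q p) ?_ (by rwa [hA])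
    rw [mul_comm]
    exact not_sq_dvd_mul hpq.symm
  · rw [← map_mul]
    refine QuadraticOrder.not_isSquare_mk0 (p := p) (dvd_mul_right p q) (not_sq_dvd_mul hpq) ?_
    simpa [hR, hA] using h2wp

theorem two_class_group_of_type_two_twoPow_general {k w p₁ p₂ : ℕ} [Fact p₁.Prime]
    [Fact p₂.Prime] (hw : Odd w) (hsum : p₁ + p₂ = 2 * w ^ 2 ^ k)
    (h2p₁ : ¬ IsSquare (2 : ZMod p₁)) (h2wp₁ : ¬ IsSquare (2 * w : ZMod p₁))
    (hwp₂ : ¬ IsSquare (w : ZMod p₂)) :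
    twoClassGroupIso (p₁ * p₂) (Multiplicative (ZMod 2 × ZMod (2 ^ (k + 1)))) := by
  have hp₁ : p₁.Prime := Fact.out
  have hp₂ : p₂.Prime := Fact.out
  have hne : p₁ ≠ p₂ := ne_of_add_eq_two_mul_pow hwp₂ hsum
  have hp₁2 : p₁ ≠ 2 := by
    rintro rfl
    exact h2p₁ ⟨0, by reduce_mod_char⟩
  have hsqfree : Squarefree (p₁ * p₂) :=
    (Nat.squarefree_mul ((Nat.coprime_primes hp₁ hp₂).mpr hne)).mpr
      ⟨hp₁.squarefree, hp₂.squarefree⟩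
  have hmod : p₁ * p₂ % 4 = 1 := mul_mod_four_eq_one (hp₁.odd_of_ne_two hp₁2) hw.pow hsum
  exact twoClassGroupIso_of_forall_sylow_mulEquiv hsqfree hmod
    (sylow_two_classGroup_quadraticOrder_mulEquiv hw hsum hmod h2p₁ h2wp₁ hwp₂)

/-- If `ℓ ≥ 2`, `m` is an odd positive integer, `w = 3m²`, and `p₁ ≡ 11 (mod 24)`,
`p₂ ≡ 7 (mod 24)` are primes with `p₁ + p₂ = 2·w^(2^(ℓ-1))`, then the 2-class group of
`ℚ(√(-p₁p₂))` is isomorphic to `(ℤ/2ℤ) × (ℤ/2^ℓℤ)`. -/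
theorem two_class_group_of_type_two_twoPow (ℓ : ℕ) (hℓ : 2 ≤ ℓ)
    (m : ℕ) (hm0 : 0 < m) (hm : Odd m) (w : ℕ) (hw : w = 3 * m ^ 2)
    (p₁ p₂ : ℕ) (hp₁ : p₁.Prime) (hp₂ : p₂.Prime)
    (h₁ : p₁ % 24 = 11) (h₂ : p₂ % 24 = 7)
    (hsum : p₁ + p₂ = 2 * w ^ 2 ^ (ℓ - 1)) :
    twoClassGroupIso (p₁ * p₂) (Multiplicative (ZMod 2 × ZMod (2 ^ ℓ))) := by
  obtain ⟨k, rfl⟩ := Nat.exists_eq_succ_of_ne_zero (show ℓ ≠ 0 by omega)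
  subst hw
  have : Fact p₁.Prime := ⟨hp₁⟩
  have : Fact p₂.Prime := ⟨hp₂⟩
  have hodd : Odd (3 * m ^ 2) := (by decide : Odd 3).mul hm.pow
  have hp₁w : ¬ p₁ ∣ 3 * m ^ 2 :=
    not_dvd_left_of_add_eq_two_mul_pow (by omega) (by positivity) hsum
  have hp₂w : ¬ p₂ ∣ 3 * m ^ 2 :=
    not_dvd_left_of_add_eq_two_mul_pow (by omega) (by positivity) ((add_comm p₂ p₁).trans hsum)
  exact two_class_group_of_type_two_twoPow_general hodd hsum (not_isSquare_two_zmod (by omega))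
    (not_isSquare_two_mul_three_mul_sq_zmod h₁ hp₁w)
    (not_isSquare_three_mul_sq_zmod (by omega) hp₂w)
end

section
/- Fix a positive integer m and integers s₁, s₂ coprime to m. For every positive integer h: if h ≢ s₁ + s₂ (mod m) then 𝔖_{s₁s₂}(h) = 0, and if h ≡ s₁ + s₂ (mod m) then 𝔖_{s₁s₂}(h) = (m/φ(m)²) · ∏_{p prime, p ∤ h, p ∤ m} (1 − 1/(p−1)²) · ∏_{p prime, p | h, p ∤ m} (1 + 1/(p−1)). Moreover, if m is even then there is a constant c > 0 depending only on m such that 𝔖_S(h) ≥ c for every even positive integer h with h ≡ s₁ + s₂ (mod m). -/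
open scoped BigOperators

/-- `e(x) = exp(2πix)`. -/
noncomputable def eC (x : ℝ) : ℂ := Complex.exp (2 * Real.pi * Complex.I * x)

/-- `f_s(α) = ∑_{p ≤ c₁N, p prime, p ≡ s (mod m)} (log p)·e(αp)`. -/
noncomputable def fsum (m : ℕ) (s : ℤ) (c₁ : ℝ) (N : ℕ) (α : ℝ) : ℂ :=
  ∑ p ∈ (Finset.range (⌊c₁ * (N : ℝ)⌋₊ + 1)).filter
      (fun p => Nat.Prime p ∧ (p : ℤ) ≡ s [ZMOD (m : ℤ)]),
    (Real.log p : ℂ) * eC (α * p)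

/-- `R_S(h) = ∫₀¹ (f_{s₁}(α) + f_{s₂}(α))² e(-αh) dα`. -/
noncomputable def RS (m : ℕ) (s₁ s₂ : ℤ) (c₁ : ℝ) (N : ℕ) (h : ℤ) : ℂ :=
  ∫ α in (0:ℝ)..1, (fsum m s₁ c₁ N α + fsum m s₂ c₁ N α) ^ 2 * eC (-(α * (h : ℝ)))

/-- `μ_s(q, a) = ∑_{1 ≤ r ≤ q, gcd(r,q)=1, r ≡ s (mod d)} e(ar/q)` where `d = gcd(q, m)`. -/
noncomputable def muS (m : ℕ) (s : ℤ) (q a : ℕ) : ℂ :=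
  ∑ r ∈ (Finset.Icc 1 q).filter
      (fun r => Nat.Coprime r q ∧ (r : ℤ) ≡ s [ZMOD (Nat.gcd q m : ℤ)]),
    eC (((a * r : ℕ) : ℝ) / (q : ℝ))

/-- The `q`-th term of the singular series,
`∑_{1 ≤ a ≤ q, gcd(a,q)=1} μ_{s₁}(q,a)μ_{s₂}(q,a)e(-ah/q)/φ(q₀m)²`, with `q₀ = q/gcd(q,m)`. -/
noncomputable def singTerm (m : ℕ) (s₁ s₂ : ℤ) (h : ℤ) (q : ℕ) : ℂ :=
  ∑ a ∈ (Finset.Icc 1 q).filter (fun a => Nat.Coprime a q),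
    muS m s₁ q a * muS m s₂ q a * eC (-((a : ℝ) * (h : ℝ)) / (q : ℝ)) /
      (Nat.totient ((q / Nat.gcd q m) * m) : ℂ) ^ 2

/-- The singular series `𝔖_{s₁s₂}(h)`. -/
noncomputable def singSeries (m : ℕ) (s₁ s₂ : ℤ) (h : ℤ) : ℂ :=
  ∑' q : ℕ, singTerm m s₁ s₂ h q

/-- `𝔖_S(h) = 𝔖_{s₁s₁}(h) + 2𝔖_{s₁s₂}(h) + 𝔖_{s₂s₂}(h)`. -/
noncomputable def singS (m : ℕ) (s₁ s₂ : ℤ) (h : ℤ) : ℂ :=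
  singSeries m s₁ s₁ h + 2 * singSeries m s₁ s₂ h + singSeries m s₂ s₂ h

/-!
Summing over `a` first turns the `q`-th term into a double sum of Ramanujan sums
`c_q(r₁ + r₂ - h)` over admissible residues `r₁, r₂` modulo `q`, and multiplied by `φ(m)²` this is
multiplicative in `q` by the Chinese remainder theorem, so the series is an Euler product. At a
prime power `p ^ e`:

* if `p ^ e ∣ m`, there is one admissible residue in each class and the term is
  `c_{p^e}(s₁ + s₂ - h)`; summed over `p ^ e ∣ m` these give the complete exponential sum modulo
  `p ^ v`, `v = v_p(m)`, which is `p ^ v` or `0` according as `p ^ v ∣ s₁ + s₂ - h` or not;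
* if `p ^ e ∤ m` and `e ≥ 2`, admissibility only depends on `r` modulo `p ^ (e - 1)` and the
  Ramanujan sums cancel over each such class;
* if `p ∤ m` and `e = 1`, the term is `1 / (p - 1)` or `-1 / (p - 1)²` according as `p ∣ h` or not.

For even `m` the prime `2` is absent from the infinite product, which is therefore bounded below by
the telescoping product `∏_{n ≥ 3} (1 - 1 / (n - 1)²) = 1 / 2`.
-/

section FiniteSums

open Finset
open scoped ArithmeticFunction.Moebius

variable {M : Type*} [AddCommMonoid M]

theorem sum_Icc_one_eq_sum_range {f : ℕ → M} {q : ℕ} (hf : f q = f 0) :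
    ∑ r ∈ Icc 1 q, f r = ∑ r ∈ range q, f r := by
  rcases q with _ | q
  · simp
  · rw [sum_range_succ', ← hf, ← Ico_add_one_right_eq_Icc, sum_Ico_eq_sum_range,
      Nat.add_sub_cancel, sum_range_succ]
    simp only [add_comm 1]

theorem sum_range_mul_eq_sum_sum (f : ℕ → M) (t d : ℕ) :
    ∑ r ∈ range (t * d), f r = ∑ u ∈ range t, ∑ v ∈ range d, f (u + t * v) := by
  induction d with
  | zero => simp
  | succ d ih =>
    rw [Nat.mul_succ, sum_range_add, ih]
    simp only [sum_range_succ, sum_add_distrib, add_comm (t * d)]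

theorem sum_range_mul_of_coprime {a b : ℕ} (hab : a.Coprime b) (f : ℕ → ℕ → M) :
    ∑ r ∈ range (a * b), f (r % a) (r % b) = ∑ x ∈ range a, ∑ y ∈ range b, f x y := by
  rw [← sum_product']
  have maps_to : Set.MapsTo (fun r => (r % a, r % b))
      (range (a * b)) (range a ×ˢ range b : Finset (ℕ × ℕ)) := by
    intro r hr
    have mul_pos : 0 < a * b := (Nat.zero_le r).trans_lt (by simpa using hr)
    simp [Nat.mod_lt, Nat.pos_of_mul_pos_left mul_pos, Nat.pos_of_mul_pos_right mul_pos]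
  have inj_on : Set.InjOn (fun r => (r % a, r % b)) (range (a * b)) := by
    intro r hr r' hr' h
    rw [Prod.mk.injEq] at h
    exact ((Nat.modEq_and_modEq_iff_modEq_mul hab).mp h).eq_of_lt_of_lt
      (by simpa using hr) (by simpa using hr')
  exact sum_nbij _ maps_to inj_on (surjOn_of_injOn_of_card_le _ maps_to inj_on (by simp))
    fun _ _ => rfl

theorem sum_Icc_filter_dvd (f : ℕ → M) (q : ℕ) {d : ℕ} (hd : d ≠ 0) :
    ∑ a ∈ Icc 1 q with d ∣ a, f a = ∑ b ∈ Icc 1 (q / d), f (d * b) := by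
  have hd := Nat.pos_of_ne_zero hd
  symm
  refine sum_nbij' (d * ·) (· / d) ?_ ?_ ?_ ?_ fun _ _ => rfl
  · intro b hb
    rw [mem_Icc, Nat.le_div_iff_mul_le hd] at hb
    simpa [mul_comm d] using ⟨Nat.mul_pos hb.1 hd, hb.2⟩
  · intro a ha
    rw [mem_filter, mem_Icc] at ha
    exact mem_Icc.mpr ⟨Nat.div_pos (Nat.le_of_dvd ha.1.1 ha.2) hd, Nat.div_le_div_right ha.1.2⟩
  · exact fun b _ => Nat.mul_div_cancel_left b hd
  · exact fun a ha => Nat.mul_div_cancel' (mem_filter.mp ha).2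

theorem sum_moebius_common_divisors {q : ℕ} (hq : q ≠ 0) (a : ℕ) :
    ∑ d ∈ q.divisors with d ∣ a, μ d = if a.Coprime q then 1 else 0 := by
  have hdivisors : {d ∈ q.divisors | d ∣ a} = (a.gcd q).divisors := by
    ext d
    simp [Nat.dvd_gcd_iff, hq, and_comm]
  rw [hdivisors, ← ArithmeticFunction.coe_mul_zeta_apply, ArithmeticFunction.moebius_mul_coe_zeta,
    ArithmeticFunction.one_apply]

theorem sum_coprime_eq_sum_divisors_moebius {G : Type*} [AddCommGroup G] (f : ℕ → G) {q : ℕ}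
    (hq : q ≠ 0) :
    ∑ a ∈ Icc 1 q with a.Coprime q, f a =
      ∑ d ∈ q.divisors, μ d • ∑ b ∈ Icc 1 (q / d), f (d * b) := by
  calc ∑ a ∈ Icc 1 q with a.Coprime q, f a
      = ∑ a ∈ Icc 1 q, ∑ d ∈ q.divisors with d ∣ a, μ d • f a := by
        simp only [← sum_smul, sum_moebius_common_divisors hq, ite_smul, one_smul, zero_smul,
          sum_filter]
    _ = ∑ d ∈ q.divisors, μ d • ∑ a ∈ Icc 1 q with d ∣ a, f a := by
        simp only [sum_filter, smul_sum, smul_ite, smul_zero]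
        exact sum_comm
    _ = _ := sum_congr rfl fun d hd => by
        rw [sum_Icc_filter_dvd f q (Nat.pos_of_mem_divisors hd).ne']

end FiniteSums

section RamanujanSums

open Finset
open scoped ArithmeticFunction.Moebius

theorem eC_add (x y : ℝ) : eC (x + y) = eC x * eC y := by
  simp only [eC, ← Complex.exp_add, Complex.ofReal_add, mul_add]

theorem eC_natCast_mul (k : ℕ) (x : ℝ) : eC (k * x) = eC x ^ k := by
  rw [eC, eC, ← Complex.exp_nat_mul]
  push_cast
  ring_nf

theorem eC_eq_one_iff {x : ℝ} : eC x = 1 ↔ ∃ k : ℤ, x = k := by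
  rw [eC, Complex.exp_eq_one_iff]
  refine exists_congr fun k => ?_
  rw [mul_comm, mul_left_inj' Complex.two_pi_I_ne_zero]
  exact_mod_cast Iff.rfl

theorem eC_intCast_div_eq_one_iff (n : ℤ) {q : ℕ} (hq : q ≠ 0) :
    eC (n / q) = 1 ↔ (q : ℤ) ∣ n := by
  rw [eC_eq_one_iff]
  refine exists_congr fun k => ?_
  rw [div_eq_iff (Nat.cast_ne_zero.mpr hq), mul_comm]
  exact_mod_cast Iff.rfl

/-- The complete exponential sum `∑_{a mod q} e(an/q)` as an arithmetic function of `q`, defined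
by its value; `sum_range_eC` is the exponential form. -/
def completeSum (n : ℤ) : ArithmeticFunction ℤ :=
  ⟨fun q => if (q : ℤ) ∣ n then q else 0, by simp⟩

theorem completeSum_apply (n : ℤ) (q : ℕ) :
    completeSum n q = if (q : ℤ) ∣ n then (q : ℤ) else 0 := rfl

theorem isMultiplicative_completeSum (n : ℤ) : (completeSum n).IsMultiplicative := by
  refine ⟨by simp [completeSum_apply], fun {a b} hab => ?_⟩
  have mul_dvd_iff : ((a * b : ℕ) : ℤ) ∣ n ↔ (a : ℤ) ∣ n ∧ (b : ℤ) ∣ n := by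
    rw [Nat.cast_mul]
    exact ⟨fun h => ⟨dvd_of_mul_right_dvd h, dvd_of_mul_left_dvd h⟩,
      fun h => (Nat.isCoprime_iff_coprime.mpr hab).mul_dvd h.1 h.2⟩
  rw [completeSum_apply, if_congr mul_dvd_iff rfl rfl, completeSum_apply, completeSum_apply,
    ite_and, Nat.cast_mul]
  split_ifs <;> simp

theorem sum_range_eC (n : ℤ) {q : ℕ} (hq : q ≠ 0) :
    ∑ a ∈ range q, eC (a * (n / q)) = completeSum n q := by
  simp only [eC_natCast_mul, completeSum_apply]
  split_ifs with hdvd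
  · simp [(eC_intCast_div_eq_one_iff n hq).mpr hdvd]
  · have pow_eq_one : eC (n / q) ^ q = 1 := by
      rw [← eC_natCast_mul, eC_eq_one_iff]
      exact ⟨n, by field_simp⟩
    rw [geom_sum_eq (mt (eC_intCast_div_eq_one_iff n hq).mp hdvd), pow_eq_one]
    simp

theorem sum_Icc_eC (n : ℤ) {q : ℕ} (hq : q ≠ 0) :
    ∑ a ∈ Icc 1 q, eC (a * (n / q)) = completeSum n q := by
  rw [← sum_range_eC n hq, sum_Icc_one_eq_sum_range]
  rw [eC_eq_one_iff.mpr ⟨n, by field_simp⟩, eC_eq_one_iff.mpr ⟨0, by simp⟩]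

/-- Ramanujan's sum `c_q(n) = ∑_{a mod q, (a,q)=1} e(an/q)` as an arithmetic function of `q`. It is
defined by Möbius inversion, which makes it integral and multiplicative; `sum_coprime_eC` is the
exponential form. -/
def ramanujanSum (n : ℤ) : ArithmeticFunction ℤ := μ * completeSum n

theorem isMultiplicative_ramanujanSum (n : ℤ) : (ramanujanSum n).IsMultiplicative :=
  ArithmeticFunction.isMultiplicative_moebius.mul (isMultiplicative_completeSum n)

theorem sum_divisors_ramanujanSum (n : ℤ) (q : ℕ) :
    ∑ k ∈ q.divisors, ramanujanSum n k = completeSum n q := by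
  rw [← ArithmeticFunction.coe_zeta_mul_apply, ramanujanSum, ← mul_assoc,
    ArithmeticFunction.coe_zeta_mul_moebius, one_mul]

theorem ramanujanSum_prime (n : ℤ) {p : ℕ} (hp : p.Prime) :
    ramanujanSum n p = if (p : ℤ) ∣ n then (p : ℤ) - 1 else -1 := by
  have h := sum_divisors_ramanujanSum n p
  rw [hp.sum_divisors, (isMultiplicative_ramanujanSum n).1, completeSum_apply] at h
  split_ifs at h ⊢ <;> linarith

theorem ramanujanSum_congr {n n' : ℤ} {q : ℕ} (h : n ≡ n' [ZMOD q]) :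
    ramanujanSum n q = ramanujanSum n' q := by
  simp only [ramanujanSum, ArithmeticFunction.mul_apply]
  refine sum_congr rfl fun x hx => ?_
  have hdvd : (x.2 : ℤ) ∣ q :=
    Int.natCast_dvd_natCast.mpr
      (Nat.dvd_of_mem_divisors (Nat.snd_mem_divisors_of_mem_antidiagonal hx))
  simp only [completeSum_apply, (h.of_dvd hdvd).dvd_iff]

theorem sum_coprime_eC (n : ℤ) {q : ℕ} (hq : q ≠ 0) :
    ∑ a ∈ Icc 1 q with a.Coprime q, eC (a / q * n) = ramanujanSum n q := by
  rw [sum_coprime_eq_sum_divisors_moebius _ hq, ramanujanSum, ArithmeticFunction.mul_apply,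
    Nat.sum_divisorsAntidiagonal (f := fun i j => μ i * completeSum n j)]
  push_cast
  refine sum_congr rfl fun d hd => ?_
  obtain ⟨hdq, -⟩ := Nat.mem_divisors.mp hd
  have hd0 : (d : ℝ) ≠ 0 := Nat.cast_ne_zero.mpr (Nat.pos_of_mem_divisors hd).ne'
  rw [zsmul_eq_mul, ← sum_Icc_eC n (Nat.div_pos (Nat.le_of_dvd (Nat.pos_of_ne_zero hq) hdq)
    (Nat.pos_of_mem_divisors hd)).ne']
  congr 1
  refine sum_congr rfl fun b _ => congrArg eC ?_
  rw [Nat.cast_div hdq hd0]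
  field_simp

-- In the exponential form, each `a` prime to `td` contributes a multiple of `∑_{v mod d} e(av/d)`.
theorem sum_range_ramanujanSum_eq_zero (n : ℤ) {t d : ℕ} (ht : t ≠ 0) (hd : 1 < d) :
    ∑ v ∈ range d, ramanujanSum (n + t * v) (t * d) = 0 := by
  have hd0 : d ≠ 0 := by omega
  rw [← Int.cast_inj (α := ℂ)]
  push_cast
  simp only [← sum_coprime_eC _ (mul_ne_zero ht hd0)]
  rw [sum_comm]
  refine sum_eq_zero fun a ha => ?_
  have coprime : d.Coprime a := (mem_filter.mp ha).2.coprime_mul_left_right.symm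
  have not_dvd : ¬ (d : ℤ) ∣ (a : ℤ) := fun hdvd =>
    hd.ne' (coprime.eq_one_of_dvd (Int.natCast_dvd_natCast.mp hdvd))
  calc ∑ v ∈ range d, eC (a / (t * d : ℕ) * (n + t * v : ℤ))
      = ∑ v ∈ range d, eC (a / (t * d : ℕ) * n) * eC (v * ((a : ℤ) / d)) := by
        refine sum_congr rfl fun v _ => ?_
        rw [← eC_add]
        congr 1
        push_cast
        field_simp
    _ = 0 := by
        rw [← mul_sum, sum_range_eC a hd0, completeSum_apply, if_neg not_dvd]
        simp

theorem sum_filter_periodic_ramanujanSum (n : ℤ) {t d : ℕ} (ht : t ≠ 0) (hd : 1 < d)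
    {P : ℕ → Prop} [DecidablePred P] (hP : Function.Periodic P t) :
    ∑ r ∈ range (t * d) with P r, ramanujanSum (n + r) (t * d) = 0 := by
  rw [sum_filter, sum_range_mul_eq_sum_sum]
  refine sum_eq_zero fun u _ => ?_
  have hPu (v : ℕ) : P (u + t * v) = P u := by
    rw [mul_comm]
    exact hP.nat_mul v u
  simp only [hPu, Nat.cast_add, Nat.cast_mul, ← add_assoc]
  split_ifs
  · exact sum_range_ramanujanSum_eq_zero (n + u) ht hd
  · exact sum_const_zero

end RamanujanSums

section SingularSeriesTerms

open Finset

/-- The condition defining the range of summation of `μ_s(q, ·)`: `r` is prime to `q` and congruent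
to `s` modulo `gcd(q, m)`. -/
abbrev IsAdmissible (m : ℕ) (s : ℤ) (q r : ℕ) : Prop :=
  r.Coprime q ∧ (r : ℤ) ≡ s [ZMOD (q.gcd m : ℤ)]

/-- The admissible residues modulo `q`, represented in `[0, q)` rather than `[1, q]` so that they
are stable under reduction modulo `q`. -/
def admissibleResidues (m : ℕ) (s : ℤ) (q : ℕ) : Finset ℕ :=
  {r ∈ range q | IsAdmissible m s q r}

/-- The numerator of the `q`-th term of the singular series, after summing over `a`. -/
def residuePairSum (m : ℕ) (s₁ s₂ h : ℤ) (q : ℕ) : ℤ :=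
  ∑ r₁ ∈ admissibleResidues m s₁ q, ∑ r₂ ∈ admissibleResidues m s₂ q, ramanujanSum (r₁ + r₂ - h) q

/-- The `q`-th term of the singular series multiplied by `φ(m)²`. This normalization makes it
multiplicative in `q`. -/
noncomputable def normalizedTerm (m : ℕ) (s₁ s₂ h : ℤ) : ArithmeticFunction ℝ :=
  ⟨fun q => ((q.gcd m).totient / q.totient : ℝ) ^ 2 * residuePairSum m s₁ s₂ h q, by simp⟩

variable {m q : ℕ} {s s₁ s₂ h : ℤ}

theorem isAdmissible_iff_of_modEq {t r r' : ℕ} (hgcd : q.gcd m ∣ t)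
    (hprimes : ∀ p : ℕ, p.Prime → p ∣ q → p ∣ t) (hr : r ≡ r' [MOD t]) :
    IsAdmissible m s q r ↔ IsAdmissible m s q r' := by
  have coprime_iff : r.Coprime q ↔ r'.Coprime q := by
    rw [← not_iff_not, Nat.Prime.not_coprime_iff_dvd, Nat.Prime.not_coprime_iff_dvd]
    refine exists_congr fun p => and_congr_right fun hp => and_congr_left fun hpq => ?_
    exact hr.dvd_iff (hprimes p hp hpq)
  have modEq : (r : ℤ) ≡ r' [ZMOD (q.gcd m : ℤ)] := Int.natCast_modEq_iff.mpr (hr.of_dvd hgcd)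
  exact and_congr coprime_iff ⟨modEq.symm.trans, modEq.trans⟩

theorem isAdmissible_mod_iff {r : ℕ} : IsAdmissible m s q (r % q) ↔ IsAdmissible m s q r :=
  isAdmissible_iff_of_modEq (Nat.gcd_dvd_left q m) (fun _ _ => id) (Nat.mod_modEq r q)

theorem muS_eq_sum_admissibleResidues (hq : q ≠ 0) (a : ℕ) :
    muS m s q a = ∑ r ∈ admissibleResidues m s q, eC (a / q * r) := by
  have eC_eq (r : ℕ) : eC ((a * r : ℕ) / q) = eC (a / q * r) := by
    congr 1
    push_cast
    ring
  have eC_mod : eC (a / q * q) = eC (a / q * (0 : ℕ)) := by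
    rw [eC_eq_one_iff.mpr ⟨a, by field_simp; simp⟩, eC_eq_one_iff.mpr ⟨0, by simp⟩]
  simp only [muS, admissibleResidues, eC_eq]
  rw [sum_filter, sum_filter]
  refine sum_Icc_one_eq_sum_range ?_
  have admissible_iff : IsAdmissible m s q q ↔ IsAdmissible m s q 0 := by
    rw [← isAdmissible_mod_iff, Nat.mod_self]
  rw [if_congr admissible_iff eC_mod rfl]

theorem sum_muS_mul_muS (hq : q ≠ 0) :
    ∑ a ∈ Icc 1 q with a.Coprime q, muS m s₁ q a * muS m s₂ q a * eC (-(a * h) / q) =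
      residuePairSum m s₁ s₂ h q := by
  simp only [residuePairSum, Int.cast_sum, ← sum_coprime_eC _ hq,
    muS_eq_sum_admissibleResidues hq, sum_mul_sum]
  simp only [sum_mul, ← eC_add]
  rw [sum_comm]
  refine sum_congr rfl fun r₁ _ => ?_
  rw [sum_comm]
  refine sum_congr rfl fun r₂ _ => sum_congr rfl fun a _ => congrArg eC ?_
  push_cast
  ring

theorem totient_gcd_mul_totient_div_gcd_mul (hm : m ≠ 0) (q : ℕ) :
    (q.gcd m).totient * (q / q.gcd m * m).totient = q.totient * m.totient := by
  have gcd_pos : 0 < q.gcd m := Nat.gcd_pos_of_pos_right q (Nat.pos_of_ne_zero hm)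
  have gcd_eq : (q.gcd m).gcd (q / q.gcd m * m) = q.gcd m :=
    Nat.gcd_eq_left ((Nat.gcd_dvd_right q m).trans (dvd_mul_left _ _))
  have mul_eq : q.gcd m * (q / q.gcd m * m) = q * m := by
    rw [← mul_assoc, Nat.mul_div_cancel' (Nat.gcd_dvd_left q m)]
  have h := Nat.totient_gcd_mul_totient_mul (q.gcd m) (q / q.gcd m * m)
  rw [gcd_eq, mul_eq, Nat.totient_gcd_mul_totient_mul] at h
  exact (Nat.eq_of_mul_eq_mul_right gcd_pos h).symm

theorem singTerm_eq_normalizedTerm_div (hm : m ≠ 0) :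
    singTerm m s₁ s₂ h q = (normalizedTerm m s₁ s₂ h q / (m.totient : ℝ) ^ 2 : ℝ) := by
  rcases eq_or_ne q 0 with rfl | hq
  · simp [singTerm]
  have totient_ne_zero {n : ℕ} (hn : n ≠ 0) : (n.totient : ℂ) ≠ 0 :=
    Nat.cast_ne_zero.mpr (Nat.totient_pos.mpr (Nat.pos_of_ne_zero hn)).ne'
  have totient_eq : ((q.gcd m).totient : ℂ) * (q / q.gcd m * m).totient = q.totient * m.totient :=
    mod_cast totient_gcd_mul_totient_div_gcd_mul hm q
  have hφq := totient_ne_zero hq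
  have hφm := totient_ne_zero hm
  have hφ : ((q / q.gcd m * m).totient : ℂ) ≠ 0 :=
    right_ne_zero_of_mul (totient_eq ▸ mul_ne_zero hφq hφm)
  have hratio : ((q.gcd m).totient / q.totient : ℂ) = m.totient / (q / q.gcd m * m).totient := by
    rw [div_eq_div_iff hφq hφ, totient_eq, mul_comm]
  rw [singTerm, ← sum_div, sum_muS_mul_muS hq]
  simp only [normalizedTerm, ArithmeticFunction.coe_mk]
  push_cast
  rw [hratio]
  field_simp

theorem admissibleResidues_one : admissibleResidues m s 1 = {0} := by
  simp [admissibleResidues, IsAdmissible, Int.modEq_one]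

theorem gcd_mul_left_of_coprime {a b : ℕ} (hab : a.Coprime b) (m : ℕ) :
    (a * b).gcd m = a.gcd m * b.gcd m := by
  rw [Nat.gcd_comm, hab.gcd_mul, Nat.gcd_comm a, Nat.gcd_comm b]

theorem coprime_gcd_gcd {a b : ℕ} (hab : a.Coprime b) (m : ℕ) : (a.gcd m).Coprime (b.gcd m) :=
  (hab.coprime_dvd_left (Nat.gcd_dvd_left a m)).coprime_dvd_right (Nat.gcd_dvd_left b m)

theorem isAdmissible_mul_iff {a b r : ℕ} (hab : a.Coprime b) :
    IsAdmissible m s (a * b) r ↔ IsAdmissible m s a r ∧ IsAdmissible m s b r := by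
  have modEq_iff : (r : ℤ) ≡ s [ZMOD ((a * b).gcd m : ℤ)] ↔
      (r : ℤ) ≡ s [ZMOD (a.gcd m : ℤ)] ∧ (r : ℤ) ≡ s [ZMOD (b.gcd m : ℤ)] := by
    rw [Int.modEq_and_modEq_iff_modEq_mul (by simpa using coprime_gcd_gcd hab m),
      gcd_mul_left_of_coprime hab, Nat.cast_mul]
  rw [IsAdmissible, modEq_iff, Nat.coprime_mul_iff_right]
  tauto

theorem sum_admissibleResidues_mul {M : Type*} [AddCommMonoid M] {a b : ℕ} (hab : a.Coprime b)
    (f : ℕ → ℕ → M) :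
    ∑ r ∈ admissibleResidues m s (a * b), f (r % a) (r % b) =
      ∑ x ∈ admissibleResidues m s a, ∑ y ∈ admissibleResidues m s b, f x y := by
  have indicator_mul (r : ℕ) :
      (if IsAdmissible m s (a * b) r then f (r % a) (r % b) else 0) =
        if IsAdmissible m s a (r % a) then
          if IsAdmissible m s b (r % b) then f (r % a) (r % b) else 0 else 0 := by
    rw [← ite_and]
    refine if_congr ?_ rfl rfl
    rw [isAdmissible_mul_iff hab, isAdmissible_mod_iff, isAdmissible_mod_iff]
  simp only [admissibleResidues, sum_filter, indicator_mul]
  rw [sum_range_mul_of_coprime hab fun x y =>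
    if IsAdmissible m s a x then if IsAdmissible m s b y then f x y else 0 else 0]
  simp only [ite_sum_zero]

theorem residuePairSum_mul {a b : ℕ} (hab : a.Coprime b) :
    residuePairSum m s₁ s₂ h (a * b) = residuePairSum m s₁ s₂ h a * residuePairSum m s₁ s₂ h b := by
  have ramanujanSum_mod (r₁ r₂ c : ℕ) :
      ramanujanSum (r₁ + r₂ - h) c = ramanujanSum ((r₁ % c : ℕ) + (r₂ % c : ℕ) - h) c := by
    refine ramanujanSum_congr (.sub_right h (.add ?_ ?_)) <;>
      exact Int.natCast_modEq_iff.mpr (Nat.mod_modEq _ c).symm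
  have ramanujanSum_mul (r₁ r₂ : ℕ) : ramanujanSum (r₁ + r₂ - h) (a * b) =
      ramanujanSum ((r₁ % a : ℕ) + (r₂ % a : ℕ) - h) a *
        ramanujanSum ((r₁ % b : ℕ) + (r₂ % b : ℕ) - h) b := by
    rw [(isMultiplicative_ramanujanSum _).2 hab, ramanujanSum_mod _ _ a, ramanujanSum_mod _ _ b]
  have sum_r₂ (x y : ℕ) :
      ∑ r ∈ admissibleResidues m s₂ (a * b),
          ramanujanSum (x + (r % a : ℕ) - h) a * ramanujanSum (y + (r % b : ℕ) - h) b =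
        (∑ u ∈ admissibleResidues m s₂ a, ramanujanSum (x + u - h) a) *
          ∑ v ∈ admissibleResidues m s₂ b, ramanujanSum (y + v - h) b := by
    rw [sum_mul_sum, sum_admissibleResidues_mul hab fun u v =>
      ramanujanSum (x + u - h) a * ramanujanSum (y + v - h) b]
  simp only [residuePairSum, ramanujanSum_mul, sum_r₂]
  rw [sum_mul_sum, sum_admissibleResidues_mul hab fun x y =>
    (∑ u ∈ admissibleResidues m s₂ a, ramanujanSum (x + u - h) a) *
      ∑ v ∈ admissibleResidues m s₂ b, ramanujanSum (y + v - h) b]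

theorem isMultiplicative_normalizedTerm (m : ℕ) (s₁ s₂ h : ℤ) :
    (normalizedTerm m s₁ s₂ h).IsMultiplicative := by
  refine ⟨?_, fun {a b} hab => ?_⟩
  · simp [normalizedTerm, residuePairSum, admissibleResidues_one,
      (isMultiplicative_ramanujanSum _).1]
  · simp only [normalizedTerm, ArithmeticFunction.coe_mk]
    rw [residuePairSum_mul hab, gcd_mul_left_of_coprime hab,
      Nat.totient_mul (coprime_gcd_gcd hab m), Nat.totient_mul hab]
    push_cast
    rw [mul_div_mul_comm]
    ring

theorem exists_admissibleResidues_eq_singleton (hs : IsCoprime s m) (hq : q ≠ 0) (hqm : q ∣ m) :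
    ∃ r : ℕ, admissibleResidues m s q = {r} ∧ (r : ℤ) ≡ s [ZMOD q] := by
  have hq' : (q : ℤ) ≠ 0 := Nat.cast_ne_zero.mpr hq
  lift s % q to ℕ using Int.emod_nonneg s hq' with r hr
  have modEq : (r : ℤ) ≡ s [ZMOD q] := hr ▸ Int.mod_modEq s q
  have lt : r < q := by
    have := Int.emod_lt_of_pos s (show (0 : ℤ) < q by omega)
    omega
  have coprime : r.Coprime q := by
    have hsq : IsCoprime s q := hs.of_isCoprime_of_dvd_right (Int.natCast_dvd_natCast.mpr hqm)
    rw [← Nat.isCoprime_iff_coprime, hr]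
    rwa [Int.isCoprime_iff_gcd_eq_one, Int.gcd_emod, ← Int.isCoprime_iff_gcd_eq_one]
  refine ⟨r, ?_, modEq⟩
  ext x
  simp only [admissibleResidues, IsAdmissible, mem_filter, mem_range, mem_singleton,
    Nat.gcd_eq_left hqm]
  constructor
  · rintro ⟨x_lt, -, x_modEq⟩
    exact (Int.natCast_modEq_iff.mp (x_modEq.trans modEq.symm)).eq_of_lt_of_lt x_lt lt
  · rintro rfl
    exact ⟨lt, coprime, modEq⟩

theorem normalizedTerm_of_dvd (hs₁ : IsCoprime s₁ m) (hs₂ : IsCoprime s₂ m) (hq : q ≠ 0)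
    (hqm : q ∣ m) : normalizedTerm m s₁ s₂ h q = ramanujanSum (s₁ + s₂ - h) q := by
  obtain ⟨r₁, residues_eq₁, modEq₁⟩ := exists_admissibleResidues_eq_singleton hs₁ hq hqm
  obtain ⟨r₂, residues_eq₂, modEq₂⟩ := exists_admissibleResidues_eq_singleton hs₂ hq hqm
  have hφ : (q.totient : ℝ) ≠ 0 :=
    Nat.cast_ne_zero.mpr (Nat.totient_pos.mpr (Nat.pos_of_ne_zero hq)).ne'
  simp [normalizedTerm, residuePairSum, residues_eq₁, residues_eq₂, Nat.gcd_eq_left hqm, hφ,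
    ramanujanSum_congr ((modEq₁.add modEq₂).sub_right h)]

theorem normalizedTerm_mul_eq_zero {t d : ℕ} (ht : t ≠ 0) (hd : 1 < d)
    (hgcd : (t * d).gcd m ∣ t) (hprimes : ∀ p : ℕ, p.Prime → p ∣ t * d → p ∣ t) :
    normalizedTerm m s₁ s₂ h (t * d) = 0 := by
  have periodic : Function.Periodic (IsAdmissible m s₂ (t * d)) t := fun r =>
    propext (isAdmissible_iff_of_modEq hgcd hprimes (by simp [Nat.ModEq]))
  have inner_sum_eq_zero (r₁ : ℕ) :
      ∑ r₂ ∈ admissibleResidues m s₂ (t * d), ramanujanSum (r₁ + r₂ - h) (t * d) = 0 := by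
    simp only [add_sub_right_comm]
    exact sum_filter_periodic_ramanujanSum (r₁ - h) ht hd periodic
  have pairSum_eq_zero : residuePairSum m s₁ s₂ h (t * d) = 0 := by
    simp only [residuePairSum, inner_sum_eq_zero, sum_const_zero]
  simp [normalizedTerm, pairSum_eq_zero]

theorem normalizedTerm_prime_pow_eq_zero {p e : ℕ} (hp : p.Prime) (he : 2 ≤ e)
    (hpm : ¬ p ^ e ∣ m) : normalizedTerm m s₁ s₂ h (p ^ e) = 0 := by
  obtain ⟨k, rfl⟩ : ∃ k, e = k + 1 := ⟨e - 1, by omega⟩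
  rw [pow_succ] at hpm ⊢
  refine normalizedTerm_mul_eq_zero (pow_ne_zero k hp.ne_zero) hp.one_lt ?_ fun p' hp' hdvd => ?_
  · obtain ⟨j, hj, gcd_eq⟩ := (Nat.dvd_prime_pow hp).mp (Nat.gcd_dvd_left (p ^ (k + 1)) m)
    rw [← pow_succ] at hpm ⊢
    have hj' : j ≠ k + 1 := by
      rintro rfl
      exact hpm (gcd_eq ▸ Nat.gcd_dvd_right _ m)
    exact gcd_eq ▸ pow_dvd_pow p (by omega)
  · rw [← pow_succ] at hdvd
    exact (hp'.dvd_of_dvd_pow hdvd).trans (dvd_pow_self p (by omega))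

theorem sum_admissibleResidues_prime {p : ℕ} (hp : p.Prime) (hpm : ¬ p ∣ m) (n : ℤ) :
    ∑ r ∈ admissibleResidues m s p, ramanujanSum (n + r) p = -ramanujanSum n p := by
  have residues_eq : admissibleResidues m s p = (range p).erase 0 := by
    ext r
    simp only [admissibleResidues, IsAdmissible, (hp.coprime_iff_not_dvd.mpr hpm).gcd_eq_one,
      Nat.cast_one, Int.modEq_one, and_true, mem_filter, mem_range, mem_erase]
    rw [and_comm, and_congr_left]
    intro r_lt
    rw [Nat.coprime_comm, hp.coprime_iff_not_dvd]
    exact ⟨fun h h0 => h (h0 ▸ dvd_zero p), fun h0 => Nat.not_dvd_of_pos_of_lt (by omega) r_lt⟩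
  have complete := sum_range_ramanujanSum_eq_zero n one_ne_zero hp.one_lt
  simp only [Nat.cast_one, one_mul] at complete
  rw [residues_eq, sum_erase_eq_sub (mem_range.mpr hp.pos), complete]
  simp

theorem normalizedTerm_prime {p : ℕ} (hp : p.Prime) (hpm : ¬ p ∣ m) :
    normalizedTerm m s₁ s₂ h p =
      if (p : ℤ) ∣ h then 1 / ((p : ℝ) - 1) else -1 / ((p : ℝ) - 1) ^ 2 := by
  have pairSum_eq : residuePairSum m s₁ s₂ h p = ramanujanSum (-h) p := by
    have comm_sub (r₁ r₂ : ℕ) : (r₁ + r₂ - h : ℤ) = -h + r₁ + r₂ := by ring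
    simp only [residuePairSum, comm_sub, sum_admissibleResidues_prime hp hpm, sum_neg_distrib,
      neg_neg]
  have hp1 : (p : ℝ) - 1 ≠ 0 := sub_ne_zero.mpr (mod_cast hp.one_lt.ne')
  simp only [normalizedTerm, ArithmeticFunction.coe_mk, pairSum_eq, ramanujanSum_prime _ hp,
    dvd_neg, (hp.coprime_iff_not_dvd.mpr hpm).gcd_eq_one, Nat.totient_one, Nat.totient_prime hp,
    Nat.cast_sub hp.one_le, Nat.cast_one]
  split_ifs <;> push_cast <;> field_simp

end SingularSeriesTerms

section EulerProducts

open Finset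

section AbsoluteConvergence

variable {R : Type*} [NormedRing R] [NormOneClass R] [NormMulClass R] {f : ArithmeticFunction R}

theorem sum_range_norm_le_prod_primesBelow_tsum (hf : f.IsMultiplicative)
    (hpow : ∀ p : ℕ, p.Prime → Summable fun e => ‖f (p ^ e)‖) (N : ℕ) :
    ∑ n ∈ range N, ‖f n‖ ≤ ∏ p ∈ N.primesBelow, ∑' e, ‖f (p ^ e)‖ := by
  obtain ⟨-, hasSum_smooth⟩ := EulerProduct.summable_and_hasSum_smoothNumbers_prod_primesBelow_tsum
    (f := fun n => ‖f n‖) (by simp [hf.1]) (fun {a b} hab => by simp [hf.2 hab])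
    (fun {p} hp => by simpa using hpow p hp) N
  have smooth : ∀ n ∈ (range N).erase 0, n ∈ N.smoothNumbers := fun n hn =>
    Nat.mem_smoothNumbers_of_lt (Nat.pos_of_ne_zero (ne_of_mem_erase hn))
      (mem_range.mp (mem_of_mem_erase hn))
  rw [← hasSum_smooth.tsum_eq, ← sum_erase (range N) (a := 0) (by simp),
    ← sum_subtype_of_mem (fun n => ‖f n‖) smooth]
  exact hasSum_smooth.summable.sum_le_tsum _ fun _ _ => norm_nonneg _

theorem summable_norm_of_isMultiplicative (hf : f.IsMultiplicative)
    (hpow : ∀ p : ℕ, p.Prime → Summable fun e => ‖f (p ^ e)‖)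
    (hprimes : Summable fun p : Nat.Primes => ∑' e, ‖f (p ^ (e + 1))‖) :
    Summable fun n => ‖f n‖ := by
  have local_le (p : ℕ) (hp : p.Prime) :
      ∑' e, ‖f (p ^ e)‖ ≤ Real.exp (∑' e, ‖f (p ^ (e + 1))‖) := by
    rw [(hpow p hp).tsum_eq_zero_add, pow_zero, hf.1, norm_one, add_comm]
    exact Real.add_one_le_exp _
  have partial_sum_le (S : Finset Nat.Primes) :
      ∑ p ∈ S, ∑' e, ‖f (p ^ (e + 1))‖ ≤ ∑' p : Nat.Primes, ∑' e, ‖f (p ^ (e + 1))‖ :=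
    hprimes.sum_le_tsum S fun p _ => tsum_nonneg fun _ => norm_nonneg _
  refine summable_of_sum_range_le (c := Real.exp (∑' p : Nat.Primes, ∑' e, ‖f (p ^ (e + 1))‖))
    (fun n => norm_nonneg _) fun N => ?_
  calc ∑ n ∈ range N, ‖f n‖
      ≤ ∏ p ∈ N.primesBelow, ∑' e, ‖f (p ^ e)‖ := sum_range_norm_le_prod_primesBelow_tsum hf hpow N
    _ ≤ ∏ p ∈ N.primesBelow, Real.exp (∑' e, ‖f (p ^ (e + 1))‖) :=
        prod_le_prod (fun p _ => tsum_nonneg fun _ => norm_nonneg _) fun p hp =>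
          local_le p (Nat.prime_of_mem_primesBelow hp)
    _ = Real.exp (∑ p ∈ N.primesBelow.subtype Nat.Prime, ∑' e, ‖f (p ^ (e + 1))‖) := by
        rw [sum_subtype_of_mem (fun p : ℕ => ∑' e, ‖f (p ^ (e + 1))‖)
          fun p => Nat.prime_of_mem_primesBelow, Real.exp_sum]
    _ ≤ Real.exp (∑' p : Nat.Primes, ∑' e, ‖f (p ^ (e + 1))‖) :=
        Real.exp_le_exp.mpr (partial_sum_le (N.primesBelow.subtype Nat.Prime))

end AbsoluteConvergence

theorem summable_primes_one_div_sub_one_sq :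
    Summable fun p : Nat.Primes => 1 / ((p : ℝ) - 1) ^ 2 := by
  have summable_nat : Summable fun n : ℕ => 1 / ((n : ℝ) - 1) ^ 2 := by
    rw [← summable_nat_add_iff 1]
    simp
  exact summable_nat.comp_injective Subtype.val_injective

theorem eventually_primes_not_dvd {n : ℕ} (hn : n ≠ 0) :
    ∀ᶠ p : Nat.Primes in Filter.cofinite, ¬ (p : ℕ) ∣ n := by
  have finite_dvd : {d | d ∣ n}.Finite :=
    n.divisors.finite_toSet.subset fun d hd => by simpa [hn] using hd
  rw [Filter.eventually_cofinite]
  exact (finite_dvd.preimage Subtype.val_injective.injOn).subset fun p => not_not.mp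

theorem hasProd_primes_ite_mem {M : Type*} [CommMonoid M] [TopologicalSpace M] {S : Finset ℕ}
    (hS : ∀ p ∈ S, p.Prime) (g : ℕ → M) :
    HasProd (fun p : Nat.Primes => if (p : ℕ) ∈ S then g p else 1) (∏ p ∈ S, g p) := by
  rw [← prod_subtype_of_mem g hS, prod_congr rfl fun p hp => (if_pos (mem_subtype.mp hp)).symm]
  exact hasProd_prod_of_ne_finset_one fun p hp => if_neg (mt mem_subtype.mpr hp)

section OneSubInvSq

variable {P : ℕ → Prop} [DecidablePred P]

theorem multipliable_primes_one_sub_inv_sq :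
    Multipliable fun p : Nat.Primes => if P p then 1 - 1 / ((p : ℝ) - 1) ^ 2 else 1 := by
  have summable : Summable fun p : Nat.Primes => ‖if P p then -(1 / ((p : ℝ) - 1) ^ 2) else 0‖ := by
    refine .of_nonneg_of_le (fun _ => norm_nonneg _) (fun p => ?_)
      summable_primes_one_div_sub_one_sq
    split_ifs
    · rw [norm_neg, Real.norm_of_nonneg (by positivity)]
    · rw [norm_zero]
      positivity
  refine (multipliable_one_add_of_summable summable).congr fun p => ?_
  split_ifs <;> ring

theorem prod_range_one_sub_inv_sq (N : ℕ) :
    ∏ k ∈ range N, (1 - 1 / ((k : ℝ) + 2) ^ 2) = ((N : ℝ) + 2) / (2 * (N + 1)) := by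
  induction N with
  | zero => simp
  | succ N ih =>
    rw [prod_range_succ, ih]
    push_cast
    field_simp
    ring

theorem half_le_prod_one_sub_inv_sq {S : Finset ℕ} (hS : ∀ n ∈ S, 3 ≤ n) :
    1 / 2 ≤ ∏ n ∈ S, (1 - 1 / ((n : ℝ) - 1) ^ 2) := by
  obtain ⟨N, hN⟩ := S.exists_nat_subset_range
  have subset : S ⊆ Ico 3 (3 + N) := fun n hn =>
    mem_Ico.mpr ⟨hS n hn, (mem_range.mp (hN hn)).trans_le (by omega)⟩
  have factor_nonneg : ∀ n ∈ Ico 3 (3 + N), 0 ≤ 1 - 1 / ((n : ℝ) - 1) ^ 2 := by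
    intro n hn
    have three_le : (3 : ℝ) ≤ n := mod_cast (mem_Ico.mp hn).1
    rw [sub_nonneg, div_le_one (by nlinarith)]
    nlinarith
  have factor_le_one (n : ℕ) : 1 - 1 / ((n : ℝ) - 1) ^ 2 ≤ 1 := sub_le_self 1 (by positivity)
  calc (1 / 2 : ℝ) ≤ (N + 2) / (2 * (N + 1)) := by
        rw [div_le_div_iff₀ two_pos (by positivity)]
        linarith
    _ = ∏ n ∈ Ico 3 (3 + N), (1 - 1 / ((n : ℝ) - 1) ^ 2) := by
        rw [← prod_range_one_sub_inv_sq, prod_Ico_eq_prod_range, Nat.add_sub_cancel_left]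
        refine prod_congr rfl fun k _ => ?_
        push_cast
        ring_nf
    _ ≤ ∏ n ∈ S, (1 - 1 / ((n : ℝ) - 1) ^ 2) :=
        prod_le_prod_of_subset_of_le_one subset factor_nonneg fun n _ _ => factor_le_one n

theorem half_le_tprod_primes_one_sub_inv_sq (hP : ¬ P 2) :
    1 / 2 ≤ ∏' p : Nat.Primes, if P p then 1 - 1 / ((p : ℝ) - 1) ^ 2 else 1 := by
  refine ge_of_tendsto multipliable_primes_one_sub_inv_sq.hasProd (.of_forall fun S => ?_)
  have three_le : ∀ n ∈ (S.filter fun p : Nat.Primes => P p).image fun p : Nat.Primes => (p : ℕ),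
      3 ≤ n := by
    simp only [mem_image, mem_filter]
    rintro _ ⟨p, ⟨-, hp⟩, rfl⟩
    have ne_two : (p : ℕ) ≠ 2 := fun h => hP (h ▸ hp)
    have two_le := p.2.two_le
    omega
  have half_le := half_le_prod_one_sub_inv_sq three_le
  rw [prod_image, prod_filter] at half_le
  · exact half_le
  · exact Nat.Primes.coe_nat_injective.injOn

end OneSubInvSq

end EulerProducts

section SingularSeries

open Finset

variable {m : ℕ} {s₁ s₂ h : ℤ}

theorem normalizedTerm_prime_pow_eq_zero_of_notMem (hm : m ≠ 0) {p e : ℕ} (hp : p.Prime)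
    (he : e ∉ range (max 1 (m.factorization p) + 1)) : normalizedTerm m s₁ s₂ h (p ^ e) = 0 := by
  rw [mem_range, not_lt] at he
  refine normalizedTerm_prime_pow_eq_zero hp (by omega) ?_
  rw [hp.pow_dvd_iff_le_factorization hm]
  omega

theorem summable_norm_normalizedTerm (hm : m ≠ 0) (hh : h ≠ 0) :
    Summable fun q => ‖normalizedTerm m s₁ s₂ h q‖ := by
  refine summable_norm_of_isMultiplicative (isMultiplicative_normalizedTerm m s₁ s₂ h)
    (fun p hp => summable_of_ne_finset_zero
      (s := range (max 1 (m.factorization p) + 1)) fun e he => ?_)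
    (summable_primes_one_div_sub_one_sq.congr_cofinite ?_)
  · rw [normalizedTerm_prime_pow_eq_zero_of_notMem hm hp he, norm_zero]
  filter_upwards [eventually_primes_not_dvd hm,
    eventually_primes_not_dvd (Int.natAbs_ne_zero.mpr hh)] with p hpm hph
  have higher_eq_zero (e : ℕ) (he : e ≠ 0) : ‖normalizedTerm m s₁ s₂ h (p ^ (e + 1))‖ = 0 := by
    rw [normalizedTerm_prime_pow_eq_zero p.2 (by omega)
      fun hdvd => hpm ((dvd_pow_self _ e.succ_ne_zero).trans hdvd), norm_zero]
  rw [tsum_eq_single 0 higher_eq_zero, zero_add, pow_one, normalizedTerm_prime p.2 hpm,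
    if_neg (mt Int.natCast_dvd.mp hph), neg_div, norm_neg, Real.norm_of_nonneg (by positivity)]

theorem hasProd_tsum_normalizedTerm_prime_pow (hm : m ≠ 0) (hh : h ≠ 0) :
    HasProd (fun p : Nat.Primes => ∑' e, normalizedTerm m s₁ s₂ h (p ^ e))
      (∑' q, normalizedTerm m s₁ s₂ h q) :=
  (isMultiplicative_normalizedTerm m s₁ s₂ h).eulerProduct_hasProd
    (summable_norm_normalizedTerm hm hh)

theorem tsum_normalizedTerm_prime_pow_of_dvd (hm : m ≠ 0) (hs₁ : IsCoprime s₁ m)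
    (hs₂ : IsCoprime s₂ m) {p : ℕ} (hp : p.Prime) (hpm : p ∣ m) :
    ∑' e, normalizedTerm m s₁ s₂ h (p ^ e) =
      completeSum (s₁ + s₂ - h) (p ^ m.factorization p) := by
  have one_le : 1 ≤ m.factorization p := (hp.dvd_iff_one_le_factorization hm).mp hpm
  rw [tsum_eq_sum fun e => normalizedTerm_prime_pow_eq_zero_of_notMem hm hp, max_eq_right one_le,
    ← sum_divisors_ramanujanSum, Nat.sum_divisors_prime_pow hp, Int.cast_sum]
  refine sum_congr rfl fun e he => normalizedTerm_of_dvd hs₁ hs₂ (pow_ne_zero e hp.ne_zero) ?_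
  exact (hp.pow_dvd_iff_le_factorization hm).mpr (Nat.lt_succ_iff.mp (mem_range.mp he))

theorem tsum_normalizedTerm_prime_pow_of_not_dvd (hm : m ≠ 0) {p : ℕ} (hp : p.Prime)
    (hpm : ¬ p ∣ m) :
    ∑' e, normalizedTerm m s₁ s₂ h (p ^ e) =
      if (p : ℤ) ∣ h then 1 + 1 / ((p : ℝ) - 1) else 1 - 1 / ((p : ℝ) - 1) ^ 2 := by
  rw [tsum_eq_sum fun e => normalizedTerm_prime_pow_eq_zero_of_notMem hm hp,
    Nat.factorization_eq_zero_of_not_dvd hpm, max_eq_left zero_le_one, sum_range_succ,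
    sum_range_one, pow_zero, pow_one, (isMultiplicative_normalizedTerm m s₁ s₂ h).1,
    normalizedTerm_prime hp hpm]
  split_ifs <;> ring

theorem singSeries_eq_tsum_normalizedTerm_div (hm : m ≠ 0) :
    singSeries m s₁ s₂ h = ((∑' q, normalizedTerm m s₁ s₂ h q) / (m.totient : ℝ) ^ 2 : ℝ) := by
  simp only [singSeries, singTerm_eq_normalizedTerm_div hm]
  rw [← tsum_div_const, Complex.ofReal_tsum]

theorem singSeries_eq_zero (hm : m ≠ 0) (hs₁ : IsCoprime s₁ m) (hs₂ : IsCoprime s₂ m)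
    (hh : h ≠ 0) (hmod : ¬ h ≡ s₁ + s₂ [ZMOD m]) : singSeries m s₁ s₂ h = 0 := by
  obtain ⟨p, k, hp, hpkm, not_dvd⟩ :
      ∃ p k : ℕ, p.Prime ∧ p ^ k ∣ m ∧ ¬ ((p ^ k : ℕ) : ℤ) ∣ s₁ + s₂ - h := by
    rw [Int.modEq_iff_dvd, Int.natCast_dvd, Nat.dvd_iff_prime_pow_dvd_dvd] at hmod
    push Not at hmod
    simpa only [Int.natCast_dvd] using hmod
  have hk : k ≠ 0 := by
    rintro rfl
    simp at not_dvd
  have hpm : p ∣ m := (dvd_pow_self p hk).trans hpkm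
  have factor_eq_zero : ∑' e, normalizedTerm m s₁ s₂ h (p ^ e) = 0 := by
    rw [tsum_normalizedTerm_prime_pow_of_dvd hm hs₁ hs₂ hp hpm, completeSum_apply, if_neg,
      Int.cast_zero]
    refine mt (dvd_trans (Int.natCast_dvd_natCast.mpr (pow_dvd_pow p ?_))) not_dvd
    exact (hp.pow_dvd_iff_le_factorization hm).mp hpkm
  have tsum_eq_zero : ∑' q, normalizedTerm m s₁ s₂ h q = 0 :=
    (hasProd_tsum_normalizedTerm_prime_pow hm hh).unique
      (hasProd_zero_of_exists_eq_zero ⟨⟨p, hp⟩, factor_eq_zero⟩)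
  rw [singSeries_eq_tsum_normalizedTerm_div hm, tsum_eq_zero, zero_div, Complex.ofReal_zero]

/-- The value of the singular series when `h ≡ s₁ + s₂ (mod m)`: it does not depend on the residue
classes `s₁` and `s₂`. -/
noncomputable def singularProduct (m h : ℕ) : ℝ :=
  m / m.totient ^ 2 *
    (∏' p : Nat.Primes, if ¬ (p : ℕ) ∣ h ∧ ¬ (p : ℕ) ∣ m then 1 - 1 / ((p : ℝ) - 1) ^ 2 else 1) *
    ∏ p ∈ h.primeFactors with ¬ p ∣ m, (1 + 1 / ((p : ℝ) - 1))

theorem tsum_normalizedTerm_prime_pow_of_modEq (hm : m ≠ 0) (hs₁ : IsCoprime s₁ m)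
    (hs₂ : IsCoprime s₂ m) {h : ℕ} (hh : h ≠ 0) (hmod : h ≡ s₁ + s₂ [ZMOD m]) {p : ℕ}
    (hp : p.Prime) :
    ∑' e, normalizedTerm m s₁ s₂ h (p ^ e) =
      (if p ∈ m.primeFactors then (p : ℝ) ^ m.factorization p else 1) *
        (if ¬ p ∣ h ∧ ¬ p ∣ m then 1 - 1 / ((p : ℝ) - 1) ^ 2 else 1) *
        (if p ∈ {p ∈ h.primeFactors | ¬ p ∣ m} then 1 + 1 / ((p : ℝ) - 1) else 1) := by
  by_cases hpm : p ∣ m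
  · have hdvd : ((p ^ m.factorization p : ℕ) : ℤ) ∣ s₁ + s₂ - h :=
      (Int.natCast_dvd_natCast.mpr (Nat.ordProj_dvd m p)).trans (Int.modEq_iff_dvd.mp hmod)
    rw [tsum_normalizedTerm_prime_pow_of_dvd hm hs₁ hs₂ hp hpm, completeSum_apply, if_pos hdvd]
    simp [hpm, hp, hm]
  · rw [tsum_normalizedTerm_prime_pow_of_not_dvd hm hp hpm]
    by_cases hph : p ∣ h <;> simp [hpm, hph, hp, hh, Int.natCast_dvd_natCast]

theorem singSeries_eq_singularProduct (hm : m ≠ 0) (hs₁ : IsCoprime s₁ m) (hs₂ : IsCoprime s₂ m)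
    {h : ℕ} (hh : h ≠ 0) (hmod : h ≡ s₁ + s₂ [ZMOD m]) :
    singSeries m s₁ s₂ h = singularProduct m h := by
  have euler_product := hasProd_tsum_normalizedTerm_prime_pow (s₁ := s₁) (s₂ := s₂) hm
    (Nat.cast_ne_zero.mpr hh)
  simp only [fun p : Nat.Primes =>
    tsum_normalizedTerm_prime_pow_of_modEq hm hs₁ hs₂ hh hmod p.2] at euler_product
  have product_dvd_m := hasProd_primes_ite_mem (S := m.primeFactors)
    (fun p => Nat.prime_of_mem_primeFactors) fun p => (p : ℝ) ^ m.factorization p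
  have product_dvd_h := hasProd_primes_ite_mem (S := {p ∈ h.primeFactors | ¬ p ∣ m})
    (fun p hp => Nat.prime_of_mem_primeFactors (mem_filter.mp hp).1) fun p => 1 + 1 / ((p : ℝ) - 1)
  have product_other := (multipliable_primes_one_sub_inv_sq
    (P := fun p => ¬ p ∣ h ∧ ¬ p ∣ m)).hasProd
  have product_m : ∏ p ∈ m.primeFactors, (p : ℝ) ^ m.factorization p = m := by
    exact_mod_cast Nat.prod_factorization_pow_eq_self hm
  rw [singSeries_eq_tsum_normalizedTerm_div hm, singularProduct,
    euler_product.unique ((product_dvd_m.mul product_other).mul product_dvd_h), product_m]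
  congr 1
  ring

theorem div_two_le_singularProduct (hm : Even m) (h : ℕ) :
    m / (m.totient : ℝ) ^ 2 / 2 ≤ singularProduct m h := by
  have half_le_tprod := half_le_tprod_primes_one_sub_inv_sq (P := fun p => ¬ p ∣ h ∧ ¬ p ∣ m)
    fun h2 => h2.2 hm.two_dvd
  have one_le_prod : 1 ≤ ∏ p ∈ h.primeFactors with ¬ p ∣ m, (1 + 1 / ((p : ℝ) - 1)) := by
    refine one_le_prod fun p hp => ?_
    have one_le : (1 : ℝ) ≤ p :=
      mod_cast (Nat.prime_of_mem_primeFactors (mem_filter.mp hp).1).one_le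
    exact le_add_of_nonneg_right (one_div_nonneg.mpr (sub_nonneg.mpr one_le))
  calc m / (m.totient : ℝ) ^ 2 / 2 = m / (m.totient : ℝ) ^ 2 * (1 / 2) * 1 := by ring
    _ ≤ singularProduct m h := by
        rw [singularProduct]
        gcongr

theorem singSeries_eq_ite (hm : m ≠ 0) (hs₁ : IsCoprime s₁ m) (hs₂ : IsCoprime s₂ m) {h : ℕ}
    (hh : h ≠ 0) :
    singSeries m s₁ s₂ h = (if h ≡ s₁ + s₂ [ZMOD m] then singularProduct m h else 0 : ℝ) := by
  split_ifs with hmod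
  · exact singSeries_eq_singularProduct hm hs₁ hs₂ hh hmod
  · exact singSeries_eq_zero hm hs₁ hs₂ (Nat.cast_ne_zero.mpr hh) hmod

theorem im_singS (hm : m ≠ 0) (hs₁ : IsCoprime s₁ m) (hs₂ : IsCoprime s₂ m) {h : ℕ} (hh : h ≠ 0) :
    (singS m s₁ s₂ h).im = 0 := by
  simp [singS, singSeries_eq_ite hm, hs₁, hs₂, hh]

theorem le_re_singS (hm : m ≠ 0) (heven : Even m) (hs₁ : IsCoprime s₁ m) (hs₂ : IsCoprime s₂ m)
    {h : ℕ} (hh : h ≠ 0) (hmod : h ≡ s₁ + s₂ [ZMOD m]) :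
    m / (m.totient : ℝ) ^ 2 ≤ (singS m s₁ s₂ h).re := by
  have half_le := div_two_le_singularProduct heven h
  have nonneg : 0 ≤ singularProduct m h := le_trans (by positivity) half_le
  have diagonal_nonneg {s : ℤ} (hs : IsCoprime s m) : 0 ≤ (singSeries m s s h).re := by
    rw [singSeries_eq_ite hm hs hs hh, Complex.ofReal_re]
    split_ifs <;> simp [nonneg]
  have re_eq : (singS m s₁ s₂ h).re =
      (singSeries m s₁ s₁ h).re + 2 * singularProduct m h + (singSeries m s₂ s₂ h).re := by
    simp [singS, singSeries_eq_singularProduct hm hs₁ hs₂ hh hmod]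
  linarith [diagonal_nonneg hs₁, diagonal_nonneg hs₂]

end SingularSeries

/-- Product expansion of the singular series: `𝔖_{s₁s₂}(h) = 0` unless
`h ≡ s₁+s₂ (mod m)`, in which case
`𝔖_{s₁s₂}(h) = (m/φ(m)²)·∏_{p ∤ h, p ∤ m}(1 - 1/(p-1)²)·∏_{p ∣ h, p ∤ m}(1 + 1/(p-1))`;
moreover if `m` is even then `𝔖_S(h) ≥ c > 0` for all even `h ≡ s₁+s₂ (mod m)`,
with `c` depending only on `m`. -/
theorem singular_series_product (m : ℕ) (hm : 0 < m) (s₁ s₂ : ℤ)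
    (hs₁ : IsCoprime s₁ (m : ℤ)) (hs₂ : IsCoprime s₂ (m : ℤ)) :
    (∀ h : ℕ, 0 < h → ¬((h : ℤ) ≡ s₁ + s₂ [ZMOD (m : ℤ)]) →
      singSeries m s₁ s₂ (h : ℤ) = 0) ∧
    (∀ h : ℕ, 0 < h → ((h : ℤ) ≡ s₁ + s₂ [ZMOD (m : ℤ)]) →
      singSeries m s₁ s₂ (h : ℤ) =
        (((m : ℝ) / (Nat.totient m : ℝ) ^ 2 *
          (∏' p : Nat.Primes, if ¬(p : ℕ) ∣ h ∧ ¬(p : ℕ) ∣ m then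
            1 - 1 / (((p : ℕ) : ℝ) - 1) ^ 2 else 1) *
          ∏ p ∈ h.primeFactors.filter (fun p => ¬p ∣ m),
            (1 + 1 / ((p : ℝ) - 1)) : ℝ) : ℂ)) ∧
    (Even m → ∃ c : ℝ, 0 < c ∧ ∀ t₁ t₂ : ℤ, IsCoprime t₁ (m : ℤ) → IsCoprime t₂ (m : ℤ) →
      ∀ h : ℕ, 0 < h → Even h → ((h : ℤ) ≡ t₁ + t₂ [ZMOD (m : ℤ)]) →
        (singS m t₁ t₂ (h : ℤ)).im = 0 ∧ c ≤ (singS m t₁ t₂ (h : ℤ)).re) := by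
  refine ⟨fun h hh => singSeries_eq_zero hm.ne' hs₁ hs₂ (Nat.cast_ne_zero.mpr hh.ne'),
    fun h hh => singSeries_eq_singularProduct hm.ne' hs₁ hs₂ hh.ne', fun heven => ?_⟩
  have constant_pos : 0 < m / (m.totient : ℝ) ^ 2 :=
    div_pos (mod_cast hm) (pow_pos (mod_cast Nat.totient_pos.mpr hm) 2)
  exact ⟨m / (m.totient : ℝ) ^ 2, constant_pos, fun t₁ t₂ ht₁ ht₂ h hh _ hmod =>
    ⟨im_singS hm.ne' ht₁ ht₂ hh.ne', le_re_singS hm.ne' heven ht₁ ht₂ hh.ne' hmod⟩⟩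
end

section
/- Let υ, ℓ' ≥ 1 be integers and G = (ℤ/2^υℤ) × (ℤ/2^{ℓ'}ℤ). (i) If υ ≥ 2 and ℓ' ≥ 2, then every element of order 2 in G is a square in G (i.e. of the form 2g for some g ∈ G). (ii) Suppose υ = 1 and ℓ' ≥ ℓ ≥ 2; let A, B, C be the three elements of order 2 in G and let J ∈ G be an element of order 2^ℓ. If at least three of the four elements J, J+A, J+B, J+C are not squares in G, then ℓ' = ℓ. -/
/-!
In a cyclic group of order `2 ^ m`, everything killed by `2 ^ k` with `k < m` is even. Applied to
both coordinates this gives (i). For (ii), suppose `ℓ < ℓ'`: the second coordinate of `J + x` is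
then even for every `x` with `2 • x = 0`, so `J + x` is a nonsquare only if its first coordinate
is `1`. This prescribes the first coordinate of `x` and leaves two choices for the second, so at
most two of the four elements `J + x` are nonsquares.
-/

theorem natCast_dvd_of_nsmul_eq_zero {n d e : ℕ} (hd : d ≠ 0) (hde : d * e ∣ n) {b : ZMod n}
    (hb : d • b = 0) : (e : ZMod n) ∣ b := by
  obtain ⟨z, rfl⟩ := ZMod.intCast_surjective b
  have hn : (n : ℤ) ∣ d * z := by
    rw [← ZMod.intCast_zmod_eq_zero_iff_dvd]
    simpa using hb
  have hz : (e : ℤ) ∣ z := by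
    refine Int.dvd_of_mul_dvd_mul_left (a := d) (by exact_mod_cast hd) (dvd_trans ?_ hn)
    exact_mod_cast hde
  simpa using Int.cast_dvd_cast (α := ZMod n) _ _ hz

theorem even_of_two_pow_nsmul_eq_zero {k m : ℕ} (hkm : k < m) {b : ZMod (2 ^ m)}
    (hb : 2 ^ k • b = 0) : Even b :=
  even_iff_two_dvd.mpr <| mod_cast
    natCast_dvd_of_nsmul_eq_zero (pow_ne_zero k two_ne_zero) (pow_dvd_pow 2 hkm) hb

theorem even_prod_iff {G H : Type*} [Add G] [Add H] {g : G × H} :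
    Even g ↔ Even g.1 ∧ Even g.2 := by
  constructor
  · rintro ⟨h, rfl⟩
    exact ⟨⟨h.1, rfl⟩, h.2, rfl⟩
  · rintro ⟨⟨a, ha⟩, b, hb⟩
    exact ⟨(a, b), Prod.ext ha hb⟩

theorem ncard_nsmul_eq_zero_and_fst_eq_le {G H : Type*} [AddMonoid G] [AddGroup H] [Finite H]
    [IsAddCyclic H] {n : ℕ} (hn : 0 < n) (a : G) :
    {x : G × H | n • x = 0 ∧ x.1 = a}.ncard ≤ n := by
  classical
  have := Fintype.ofFinite H
  calc {x : G × H | n • x = 0 ∧ x.1 = a}.ncard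
      ≤ {y : H | n • y = 0}.ncard :=
        Set.ncard_le_ncard_of_injOn Prod.snd (fun x hx ↦ congrArg Prod.snd hx.1)
          (fun x hx y hy hxy ↦ Prod.ext (hx.2.trans hy.2.symm) hxy)
    _ ≤ n := by
        rw [Set.ncard_eq_toFinset_card', Set.toFinset_ofPred]
        exact IsAddCyclic.card_nsmul_eq_zero_le hn

theorem eq_one_of_not_even {a : ZMod 2} (ha : ¬ Even a) : a = 1 := by
  have ha0 : a ≠ 0 := by
    rintro rfl
    exact ha Even.zero
  exact Fin.eq_one_of_ne_zero a ha0

section TwoTorsionTranslates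

variable {ℓ m : ℕ} {J : ZMod 2 × ZMod (2 ^ m)}

theorem fst_eq_of_not_even_add (hℓ : 1 ≤ ℓ) (hℓm : ℓ < m) (hJ : 2 ^ ℓ • J = 0)
    {x : ZMod 2 × ZMod (2 ^ m)} (hx : 2 • x = 0) (hJx : ¬ Even (J + x)) : x.1 = 1 - J.1 := by
  have h_snd : Even (J + x).2 := by
    have hxℓ : 2 ^ ℓ • x = 0 := by
      obtain ⟨k, rfl⟩ := Nat.exists_eq_add_of_le' hℓ
      rw [pow_succ, mul_nsmul', hx, nsmul_zero]
    have hJxℓ : 2 ^ ℓ • (J + x) = 0 := by rw [nsmul_add, hJ, hxℓ, add_zero]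
    exact even_of_two_pow_nsmul_eq_zero hℓm (congrArg Prod.snd hJxℓ)
  have h_fst : J.1 + x.1 = 1 := eq_one_of_not_even fun h ↦ hJx (even_prod_iff.mpr ⟨h, h_snd⟩)
  exact eq_sub_of_add_eq' h_fst

theorem ncard_nsmul_eq_zero_and_not_even_add_le_two (hℓ : 1 ≤ ℓ) (hℓm : ℓ < m)
    (hJ : 2 ^ ℓ • J = 0) :
    {x : ZMod 2 × ZMod (2 ^ m) | 2 • x = 0 ∧ ¬ Even (J + x)}.ncard ≤ 2 :=
  calc {x : ZMod 2 × ZMod (2 ^ m) | 2 • x = 0 ∧ ¬ Even (J + x)}.ncard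
      ≤ {x : ZMod 2 × ZMod (2 ^ m) | 2 • x = 0 ∧ x.1 = 1 - J.1}.ncard :=
        Set.ncard_le_ncard fun _ hx ↦ ⟨hx.1, fst_eq_of_not_even_add hℓ hℓm hJ hx.1 hx.2⟩
    _ ≤ 2 := ncard_nsmul_eq_zero_and_fst_eq_le two_pos _

theorem le_of_three_not_even_add (hℓ : 1 ≤ ℓ) (hJ : 2 ^ ℓ • J = 0)
    {x y z : ZMod 2 × ZMod (2 ^ m)} (hxy : x ≠ y) (hxz : x ≠ z) (hyz : y ≠ z)
    (hx : 2 • x = 0) (hy : 2 • y = 0) (hz : 2 • z = 0)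
    (hJx : ¬ Even (J + x)) (hJy : ¬ Even (J + y)) (hJz : ¬ Even (J + z)) : m ≤ ℓ := by
  by_contra! hℓm
  refine (ncard_nsmul_eq_zero_and_not_even_add_le_two hℓ hℓm hJ).not_gt ?_
  rw [Set.two_lt_ncard]
  exact ⟨x, ⟨hx, hJx⟩, y, ⟨hy, hJy⟩, z, ⟨hz, hJz⟩, hxy, hxz, hyz⟩

end TwoTorsionTranslates

theorem injective_zero_vecCons_of_addOrderOf_eq_two {G : Type*} [AddMonoid G] {A B C : G}
    (hA : addOrderOf A = 2) (hB : addOrderOf B = 2) (hC : addOrderOf C = 2)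
    (hAB : A ≠ B) (hAC : A ≠ C) (hBC : B ≠ C) : Function.Injective ![0, A, B, C] := by
  have ne_zero {x : G} (hx : addOrderOf x = 2) : 0 ≠ x := by
    rintro rfl
    simp at hx
  simp only [Matrix.vecCons, Fin.cons_injective_iff]
  simp [Function.injective_of_subsingleton, ne_zero hA, ne_zero hB, ne_zero hC, hAB, hAC, hBC]

/-- In `G = (ℤ/2^υℤ) × (ℤ/2^ℓ'ℤ)`:
(i) if `υ, ℓ' ≥ 2` then every element of order 2 is a square (of the form `h + h`);
(ii) if `υ = 1` and `ℓ' ≥ ℓ ≥ 2`, `A, B, C` are the three (distinct) elements of order 2,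
`J` has order `2^ℓ`, and at least three of `J, J+A, J+B, J+C` are not squares, then
`ℓ' = ℓ`. -/
theorem two_torsion_squares (υ ℓ' : ℕ) (hυ : 1 ≤ υ) (hℓ' : 1 ≤ ℓ') :
    (2 ≤ υ → 2 ≤ ℓ' →
      ∀ g : ZMod (2 ^ υ) × ZMod (2 ^ ℓ'), addOrderOf g = 2 →
        ∃ h : ZMod (2 ^ υ) × ZMod (2 ^ ℓ'), g = h + h) ∧
    (∀ ℓ : ℕ, υ = 1 → 2 ≤ ℓ → ℓ ≤ ℓ' →
      ∀ A B C J : ZMod (2 ^ υ) × ZMod (2 ^ ℓ'),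
        addOrderOf A = 2 → addOrderOf B = 2 → addOrderOf C = 2 →
        A ≠ B → A ≠ C → B ≠ C → addOrderOf J = 2 ^ ℓ →
        (∃ i j k : Fin 4, i ≠ j ∧ i ≠ k ∧ j ≠ k ∧
          (¬∃ h, ![J, J + A, J + B, J + C] i = h + h) ∧
          (¬∃ h, ![J, J + A, J + B, J + C] j = h + h) ∧
          (¬∃ h, ![J, J + A, J + B, J + C] k = h + h)) →
        ℓ' = ℓ) := by
  constructor
  · intro hυ2 hℓ'2 g hg
    have hg2 : 2 ^ 1 • g = 0 := addOrderOf_dvd_iff_nsmul_eq_zero.mp hg.dvd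
    exact even_prod_iff.mpr
      ⟨even_of_two_pow_nsmul_eq_zero hυ2 (congrArg Prod.fst hg2),
        even_of_two_pow_nsmul_eq_zero hℓ'2 (congrArg Prod.snd hg2)⟩
  · rintro ℓ rfl hℓ2 hℓℓ' A B C J hA hB hC hAB hAC hBC hJ ⟨i, j, k, hij, hik, hjk, hi, hj, hk⟩
    have translates : ![J, J + A, J + B, J + C] = fun i ↦ J + ![0, A, B, C] i := by
      simp [funext_iff, Fin.forall_fin_succ]
    have torsion (i : Fin 4) : 2 • ![0, A, B, C] i = 0 := by
      fin_cases i
      exacts [nsmul_zero 2, addOrderOf_dvd_iff_nsmul_eq_zero.mp hA.dvd,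
        addOrderOf_dvd_iff_nsmul_eq_zero.mp hB.dvd, addOrderOf_dvd_iff_nsmul_eq_zero.mp hC.dvd]
    have distinct : Function.Injective ![0, A, B, C] :=
      injective_zero_vecCons_of_addOrderOf_eq_two hA hB hC hAB hAC hBC
    have hJℓ : 2 ^ ℓ • J = 0 := addOrderOf_dvd_iff_nsmul_eq_zero.mp hJ.dvd
    rw [translates] at hi hj hk
    have hℓ'ℓ : ℓ' ≤ ℓ := le_of_three_not_even_add (one_le_two.trans hℓ2) hJℓ
      (distinct.ne hij) (distinct.ne hik) (distinct.ne hjk) (torsion i) (torsion j) (torsion k)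
      hi hj hk
    exact hℓ'ℓ.antisymm hℓℓ'
end
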